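/- Let 𝔞, 𝔟 be fractional ideals of F, let z = x + y j_F ∈ D_F with x ∈ F_ℝ and y ∈ F_ℝ^×, and set Λ := 𝔞z + 𝔟. Then the function s ↦ Ê(Λ, s), defined for Re(s) > 1, extends meromorphically to a neighborhood of s = 1 with a simple pole at s = 1 of residue C_F/2; that is, lim_{s→1} (s − 1)·Ê(Λ, s) = C_F/2. -/

import Mathlib

/-!
Near `s = 1` the completed Eisenstein series is controlled by the Mellin transform of a theta
series on `F_ℝ^×`. For the lattice `Λ = 𝔞z + 𝔟` of covolume `V`, put
`Θ(t) = Σ_{0 ≠ λ ∈ Λ} f(tλ)`, where `f(tλ) = ∏_v exp(-n_v π |t_v λ_v|²)`.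

*Unfolding.* Let `C ⊆ F_ℝ^×` be the fundamental cone of vectors whose logarithmic image lies in a
bounded fundamental domain of the unit lattice times the norm direction. It is stable under
positive scaling, and its translates under `U_F` cover `F_ℝ^×` exactly `w_F` times. Since `Λ` is
stable under units and has no nonzero vector of norm zero, summing over unit orbits gives
`∫_C Θ(t) |N t|^{2s} d^×t = w_F · Γ_F(2s) · Σ_{λ ∈ Λ/U_F} ‖λ‖^{-2s}`, which is `w_F V^{-s} Ê(Λ, s)`
(`unfold_theta`).

*Growth of theta on the cone.* On `C` all `|t_v|` are comparable with `|N t|^{1/n}`,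
where `n = [F : ℚ]`. For small `|N t|` the theta series is a Riemann sum: comparing each
term with the average of the Gaussian over a translate of a bounded fundamental domain of `Λ`
gives `Θ(t) = 1/(V |N t|²) + O(|N t|^{1/n - 2})` (`theta_small`); the Gaussian has total mass one
with the chosen measure on `D_F`. For large `|N t|` the theta series is `O(|N t|^{-12})`
(`theta_large`).

*Mellin transform.* Because `C` is a cone, the push-forward of `d^×t` under `|N|` is a multiple
`coneVol` of `dr/r` on `(0, ∞)` (`integral_cone`). The error term therefore contributes a function
analytic on `1 - 1/(2n) < Re s < 6`, and the main term contributes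
`coneVol · ∫_0^1 r^{2s-3}/V dr = coneVol / (2V(s-1))` (`mellin_theta`). Since
`coneVol = w_F · C_F` (`coneVol_eq`), by the computation of the volume of the norm-one part of the
fundamental cone in terms of the regulator, the residue of `Ê` is `C_F/2`.

*The lattice.* With `z = x + y j` and `y` invertible, `Λ` is the image of the product of the
lattices of `𝔞` and `𝔟` under the linear isomorphism `(u, w) ↦ u z + w` of `F_ℝ × F_ℝ` onto
`D_F`; so it has a bounded fundamental domain (`latAB_fundDom`) and is non-degenerate (`latAB_nondeg`).
-/

noncomputable section
open NumberField MeasureTheory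
open scoped nonZeroDivisors

set_option linter.unusedSectionVars false
set_option linter.unnecessarySeqFocus false

namespace Hecke

instance : MeasurableSpace (Quaternion ℝ) := borel _
instance : BorelSpace (Quaternion ℝ) := ⟨rfl⟩

/-- The Haar (Lebesgue) measure on Hamilton's quaternions `ℍ ≅ ℝ⁴`. -/
def volH : Measure (Quaternion ℝ) :=
  Measure.map (Quaternion.linearIsometryEquivTuple.symm) volume

instance : SigmaFinite volH := by
  unfold volH
  exact (Quaternion.linearIsometryEquivTuple.symm.toHomeomorph.toMeasurableEquiv).sigmaFinite_map

noncomputable instance (F : Type) [Field F] [NumberField F] :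
    Fintype {v : InfinitePlace F // v.IsReal} := by classical exact Subtype.fintype _

noncomputable instance (F : Type) [Field F] [NumberField F] :
    Fintype {v : InfinitePlace F // v.IsComplex} := by classical exact Subtype.fintype _

variable (F : Type) [Field F] [NumberField F]

/-- `F_ℝ = F ⊗_ℚ ℝ = ∏_v F_v`. -/
abbrev RS := ({v : InfinitePlace F // v.IsReal} → ℝ) × ({v : InfinitePlace F // v.IsComplex} → ℂ)

/-- `D_F = ∏_v D_v` where `D_v = ℂ` for real `v` and `D_v = ℍ` for complex `v`. -/
abbrev DS := ({v : InfinitePlace F // v.IsReal} → ℂ) ×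
  ({v : InfinitePlace F // v.IsComplex} → Quaternion ℝ)

/-- The Haar measure on `F_ℝ`: Lebesgue at real places, twice Lebesgue at complex places. -/
def measR : Measure (RS F) :=
  (Measure.pi fun _ => (volume : Measure ℝ)).prod (Measure.pi fun _ => (2 : ENNReal) • (volume : Measure ℂ))

/-- The Haar measure on `D_F`: Lebesgue at real places, 4 times Lebesgue at complex places. -/
def measD : Measure (DS F) :=
  (Measure.pi fun _ => (volume : Measure ℂ)).prod (Measure.pi fun _ => (4 : ENNReal) • volH)

/-- `‖z‖ = ∏_{v real} |z_v| ∏_{v complex} |z_v|²` on `D_F`. -/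
def normD (z : DS F) : ℝ := (∏ v, ‖z.1 v‖) * ∏ v, ‖z.2 v‖ ^ 2

/-- `|N(x)| = ∏_{v real} |x_v| ∏_{v complex} |x_v|²` on `F_ℝ`. -/
def normR (x : RS F) : ℝ := (∏ v, |x.1 v|) * ∏ v, ‖x.2 v‖ ^ 2


/-- The structure map `F_ℝ → D_F` (componentwise `ℝ ↪ ℂ` resp. `ℂ ↪ ℍ`). -/
def structureMap : RS F →+* DS F :=
  RingHom.prod
    ((Pi.ringHom fun v => Complex.ofRealHom.comp (Pi.evalRingHom (fun _ => ℝ) v)).comp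
      (RingHom.fst _ _))
    ((Pi.ringHom fun v => Quaternion.ofComplex.toRingHom.comp (Pi.evalRingHom (fun _ => ℂ) v)).comp
      (RingHom.snd _ _))

/-- The map `F → D_F`. -/
def FtoD : F →+* DS F := (structureMap F).comp (NumberField.mixedEmbedding F)

/-- The element `j_F = (j_v)_v ∈ D_F`. -/
def jF : DS F := (fun _ => Complex.I, fun _ => ⟨0, 0, 1, 0⟩)

/-- The `x`-coordinate of `z = x + y j_F ∈ D_F` (`x ∈ F_ℝ`). -/
def projX (z : DS F) : RS F :=
  (fun v => (z.1 v).re, fun v => ⟨(z.2 v).re, (z.2 v).imI⟩)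

/-- The `y`-coordinate of `z = x + y j_F ∈ D_F` (`y ∈ F_ℝ`). -/
def projY (z : DS F) : RS F :=
  (fun v => (z.1 v).im, fun v => ⟨(z.2 v).imJ, (z.2 v).imK⟩)

/-- The trace `Tr_{F/ℚ}` extended to `F_ℝ`. -/
def TrR (x : RS F) : ℝ := (∑ v, x.1 v) + ∑ v, 2 * (x.2 v).re


/-- The character `ψ(x + y j_F) = exp(2πi Tr_{F/ℚ}(x))` on `D_F`. -/
def psiD (z : DS F) : ℂ := Complex.exp (2 * Real.pi * Complex.I * TrR F (projX F z))

lemma projX_add (z w : DS F) : projX F (z + w) = projX F z + projX F w := by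
  unfold projX
  refine Prod.ext (funext fun v => ?_) (funext fun v => ?_)
  · simp
  · simp only [Prod.snd_add, Pi.add_apply, Prod.fst_add]
    exact Complex.ext (by simp) (by simp)

lemma TrR_add (x y : RS F) : TrR F (x + y) = TrR F x + TrR F y := by
  unfold TrR
  simp [Finset.sum_add_distrib, mul_add]
  ring

lemma psiD_add (z w : DS F) : psiD F (z + w) = psiD F z * psiD F w := by
  unfold psiD
  rw [projX_add, TrR_add, ← Complex.exp_add]
  push_cast
  ring_nf

lemma psiD_zero : psiD F 0 = 1 := by
  have h0 : projX F (0 : DS F) = 0 := by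
    unfold projX
    refine Prod.ext (funext fun v => ?_) (funext fun v => ?_) <;>
      simp <;> rfl
  unfold psiD
  rw [h0]
  simp [TrR]

/-- The dual lattice `Λ* = {w : ψ(λ w) = 1 for all λ ∈ Λ}`. -/
def dualLat (Λ : AddSubgroup (DS F)) : AddSubgroup (DS F) where
  carrier := {w | ∀ l ∈ Λ, psiD F (l * w) = 1}
  zero_mem' := by
    intro l _
    rw [mul_zero, psiD_zero]
  add_mem' := by
    intro a b ha hb l hl
    rw [mul_add, psiD_add, ha l hl, hb l hl, mul_one]
  neg_mem' := by
    intro a ha l hl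
    have := psiD_add F (l * a) (l * -a)
    rw [← mul_add, add_neg_cancel, mul_zero, psiD_zero, ha l hl, one_mul] at this
    exact this.symm


/-- An `O_F`-lattice in `D_F`: a discrete cocompact `O_F`-submodule. -/
def IsOFLattice (Λ : AddSubgroup (DS F)) : Prop :=
  (∀ c : 𝓞 F, ∀ z ∈ Λ, FtoD F (c : F) * z ∈ Λ) ∧
    DiscreteTopology Λ ∧ CompactSpace (DS F ⧸ Λ)

/-- Non-degeneracy: no nonzero lattice point has `‖λ‖ = 0`. -/
def Nondeg (Λ : AddSubgroup (DS F)) : Prop :=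
  ∀ l ∈ Λ, l ≠ 0 → normD F l ≠ 0

/-- `V(Λ) = V`: some fundamental domain of `Λ` in `D_F` has measure `V`. -/
def HasVol (Λ : AddSubgroup (DS F)) (V : ℝ) : Prop :=
  ∃ s : Set (DS F), IsAddFundamentalDomain Λ s (measD F) ∧ measD F s = ENNReal.ofReal V

/-- `R` is a set of representatives of the nonzero `U_F`-orbits in `Λ`. -/
def IsRepr (Λ : AddSubgroup (DS F)) (R : Set (DS F)) : Prop :=
  (∀ r ∈ R, r ∈ Λ) ∧ (0 : DS F) ∉ R ∧
    ∀ l ∈ Λ, l ≠ 0 → ∃! r, r ∈ R ∧ ∃ ε : (𝓞 F)ˣ, FtoD F ((ε : 𝓞 F) : F) * r = l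

/-- The Eisenstein series `E(Λ, s) = Σ_{λ ∈ Λ/U_F} V(Λ)^s / ‖λ‖^{2s}`, written in terms
of the covolume `V` of `Λ` and a set `R` of representatives of the nonzero `U_F`-orbits. -/
def Eis (V : ℝ) (R : Set (DS F)) (s : ℂ) : ℂ :=
  ∑' r : R, (V : ℂ) ^ s / ((normD F (r : DS F) : ℂ)) ^ (2 * s)

/-- `T_F = F_ℝ^×`. -/
def TF : Set (RS F) := {x | IsUnit x}

/-- The multiplicative Haar measure `d^×t = ∏_v dt_v/|t_v|^{n_v}` on `F_ℝ`. -/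
def measT : Measure (RS F) :=
  (measR F).withDensity fun t => ENNReal.ofReal (1 / normR F t)

/-- `f(z) = ∏_v exp(-n_v π |z_v|²)` on `D_F`. -/
def fD (z : DS F) : ℝ :=
  (∏ v, Real.exp (-(Real.pi) * ‖z.1 v‖ ^ 2)) * ∏ v, Real.exp (-(2 * Real.pi) * ‖z.2 v‖ ^ 2)

/-- `f` restricted to `F_ℝ`. -/
def fR (x : RS F) : ℝ := fD F (structureMap F x)

/-- `Γ_F(s) = ∫_{T_F} f(t) |N(t)|^s d^×t`. -/
def GammaF (s : ℂ) : ℂ :=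
  ∫ t in TF F, (fR F t : ℂ) * (normR F t : ℂ) ^ s ∂(measT F)

/-- The completed Eisenstein series `Ê(Λ, s) = Γ_F(2s) E(Λ, s)`. -/
def Ehat (V : ℝ) (R : Set (DS F)) (s : ℂ) : ℂ := GammaF F (2 * s) * Eis F V R s

/-- `D` is a (strict) fundamental domain for the multiplicative action of `U_F` on `T_F`. -/
def IsUnitsFD (D : Set (RS F)) : Prop :=
  D ⊆ TF F ∧ ∀ t ∈ TF F, ∃! ε : (𝓞 F)ˣ,
    NumberField.mixedEmbedding F (((ε : 𝓞 F) : F)) * t ∈ D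

/-- `d_F`, the absolute value of the discriminant. -/
def dF : ℕ := (NumberField.discr F).natAbs

/-- `R` is a set of representatives of the nonzero `U_F`-orbits in the fractional ideal `𝔞`. -/
def IsIdealRepr (a : FractionalIdeal (𝓞 F)⁰ F) (R : Set F) : Prop :=
  (∀ r ∈ R, r ∈ a) ∧ (0 : F) ∉ R ∧
    ∀ α ∈ a, α ≠ 0 → ∃! r, r ∈ R ∧ ∃ ε : (𝓞 F)ˣ, ((ε : 𝓞 F) : F) * r = α

/-- The completed partial zeta function
`ξ_F(s, 𝔞) = d_F^{s/2} Γ_F(s) N(𝔞)^s Σ_{α ∈ 𝔞/U_F} |N(α)|^{-s}`, written in terms of a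
set `R` of representatives of the nonzero `U_F`-orbits in `𝔞`. -/
def xiF (s : ℂ) (a : FractionalIdeal (𝓞 F)⁰ F) (R : Set F) : ℂ :=
  (dF F : ℂ) ^ (s / 2) * GammaF F s * (FractionalIdeal.absNorm a : ℂ) ^ s *
    ∑' r : R, ((|Algebra.norm ℚ (r : F)| : ℚ) : ℂ) ^ (-s)

/-- The constant `C_F = 2^{r₁} (2π)^{r₂} R_F / w_F`. -/
def CF : ℝ :=
  2 ^ (Fintype.card {v : InfinitePlace F // v.IsReal}) *
    (2 * Real.pi) ^ (Fintype.card {v : InfinitePlace F // v.IsComplex}) *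
    NumberField.Units.regulator F / (NumberField.Units.torsionOrder F : ℕ)

/-- The dual ideal `𝔟* = {x ∈ F : Tr_{F/ℚ}(βx) ∈ ℤ for all β ∈ 𝔟}`. -/
def dualIdealSet (b : FractionalIdeal (𝓞 F)⁰ F) : Set F :=
  {x | ∀ β ∈ b, ∃ n : ℤ, Algebra.trace ℚ F (β * x) = n}

/-- `B_F(a, b, s) = ∫_{T_F} f(ta) f(t⁻¹ b) |N(t)|^{2s} d^×t`. -/
def BF (a b : RS F) (s : ℂ) : ℂ :=
  ∫ t in TF F, ((fR F (t * a) * fR F (Ring.inverse t * b) : ℝ) : ℂ) *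
    (normR F t : ℂ) ^ (2 * s) ∂(measT F)

/-- The lattice `Λ = 𝔞 z + 𝔟`. -/
def latAB (a b : FractionalIdeal (𝓞 F)⁰ F) (z : DS F) : AddSubgroup (DS F) where
  carrier := {w | ∃ α ∈ a, ∃ β ∈ b, w = FtoD F α * z + FtoD F β}
  zero_mem' := ⟨0, Submodule.zero_mem _, 0, Submodule.zero_mem _, by simp⟩
  add_mem' := by
    rintro w₁ w₂ ⟨α₁, hα₁, β₁, hβ₁, rfl⟩ ⟨α₂, hα₂, β₂, hβ₂, rfl⟩
    exact ⟨α₁ + α₂, Submodule.add_mem _ hα₁ hα₂, β₁ + β₂, Submodule.add_mem _ hβ₁ hβ₂, by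
      rw [map_add, map_add, add_mul]; abel⟩
  neg_mem' := by
    rintro w ⟨α, hα, β, hβ, rfl⟩
    exact ⟨-α, Submodule.neg_mem _ hα, -β, Submodule.neg_mem _ hβ, by rw [map_neg, map_neg, neg_mul]; abel⟩

/-- `P` is a set of representatives of pairs `(α, β*) ∈ (𝔞∖{0}) × (𝔟*∖{0})` modulo
`(α, β*) ∼ (αε, β*ε⁻¹)`, `ε ∈ U_F`. -/
def IsPairRepr (a b : FractionalIdeal (𝓞 F)⁰ F) (P : Set (F × F)) : Prop :=
  (∀ p ∈ P, p.1 ∈ a ∧ p.1 ≠ 0 ∧ p.2 ∈ dualIdealSet F b ∧ p.2 ≠ 0) ∧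
    ∀ α, α ∈ a → α ≠ 0 → ∀ β, β ∈ dualIdealSet F b → β ≠ 0 →
      ∃! p, p ∈ P ∧ ∃ ε : (𝓞 F)ˣ,
        α = p.1 * ((ε : 𝓞 F) : F) ∧ β = p.2 * (((ε⁻¹ : (𝓞 F)ˣ) : 𝓞 F) : F)

/-- The function `h_F(z, 𝔞, 𝔟)`, defined through
`(C_F/2) h_F = (N𝔞/N𝔟)|N(y)| ξ_F(2,𝔟) + V(𝔞)|N(y)| Σ e^{2πi Tr(xαβ*)} B_F(αy, β*, 1/2)`;
`Rb` is a set of representatives for `ξ_F(·, 𝔟)` and `P` one for the pair sum. -/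
def hF (z : DS F) (a b : FractionalIdeal (𝓞 F)⁰ F) (Rb : Set F) (P : Set (F × F)) : ℂ :=
  (2 / CF F) *
    (((FractionalIdeal.absNorm a / FractionalIdeal.absNorm b : ℚ) : ℂ) *
        (normR F (projY F z) : ℂ) * xiF F 2 b Rb +
      ((Real.sqrt (dF F) * (FractionalIdeal.absNorm a : ℚ) * normR F (projY F z) : ℝ) : ℂ) *
        ∑' p : P,
          Complex.exp (2 * Real.pi * Complex.I *
            (TrR F (projX F z * NumberField.mixedEmbedding F (p : F × F).1 *
              NumberField.mixedEmbedding F (p : F × F).2))) *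
          BF F (projY F z * NumberField.mixedEmbedding F (p : F × F).1)
            (NumberField.mixedEmbedding F (p : F × F).2) (1 / 2))


section Quadratic

variable (K : Type) [Field K] [NumberField K] [Algebra F K]

/-- `U_{K/F} = T_{K/F} ∩ U_K`: the units `δ` of `K` with `N_{K/F}(δ) = δ · δ' = 1`,
where `x ↦ x'` is the nontrivial `F`-automorphism `τ` of `K`. -/
def UKF (τ : K ≃ₐ[F] K) : Subgroup (𝓞 K)ˣ where
  carrier := {δ | ((δ : 𝓞 K) : K) * τ ((δ : 𝓞 K) : K) = 1}
  one_mem' := by simp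
  mul_mem' := by
    intro a b ha hb
    have ha' : ((a : 𝓞 K) : K) * τ ((a : 𝓞 K) : K) = 1 := ha
    have hb' : ((b : 𝓞 K) : K) * τ ((b : 𝓞 K) : K) = 1 := hb
    show (((a * b : (𝓞 K)ˣ) : 𝓞 K) : K) * τ (((a * b : (𝓞 K)ˣ) : 𝓞 K) : K) = 1
    have hab : (((a * b : (𝓞 K)ˣ) : 𝓞 K) : K) = ((a : 𝓞 K) : K) * ((b : 𝓞 K) : K) := by
      push_cast; ring
    rw [hab, map_mul]
    linear_combination (((b : 𝓞 K) : K) * τ ((b : 𝓞 K) : K)) * ha' + hb'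
  inv_mem' := by
    intro a ha
    have ha : ((a : 𝓞 K) : K) * τ ((a : 𝓞 K) : K) = 1 := ha
    show (((a⁻¹ : (𝓞 K)ˣ) : 𝓞 K) : K) * τ (((a⁻¹ : (𝓞 K)ˣ) : 𝓞 K) : K) = 1
    have h1 : ((a : 𝓞 K) : K) * (((a⁻¹ : (𝓞 K)ˣ) : 𝓞 K) : K) = 1 := by
      rw [← map_mul, ← Units.val_mul, mul_inv_cancel, Units.val_one, map_one]
    have h2 : τ ((a : 𝓞 K) : K) * τ (((a⁻¹ : (𝓞 K)ˣ) : 𝓞 K) : K) = 1 := by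
      rw [← map_mul, h1, map_one]
    calc (((a⁻¹ : (𝓞 K)ˣ) : 𝓞 K) : K) * τ (((a⁻¹ : (𝓞 K)ˣ) : 𝓞 K) : K)
        = ((((a : 𝓞 K) : K)) * τ ((a : 𝓞 K) : K)) *
            ((((a⁻¹ : (𝓞 K)ˣ) : 𝓞 K) : K) * τ (((a⁻¹ : (𝓞 K)ˣ) : 𝓞 K) : K)) := by
          rw [ha, one_mul]
      _ = (((a : 𝓞 K) : K) * (((a⁻¹ : (𝓞 K)ˣ) : 𝓞 K) : K)) *
            (τ ((a : 𝓞 K) : K) * τ (((a⁻¹ : (𝓞 K)ˣ) : 𝓞 K) : K)) := by ring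
      _ = 1 := by rw [h1, h2, mul_one]

/-- `w_{K/F} = [U_K : U_F U_{K/F}]`. -/
def wKF (τ : K ≃ₐ[F] K) : ℕ :=
  ((Units.map (algebraMap (𝓞 F) (𝓞 K)).toMonoidHom).range ⊔ UKF F K τ).index

/-- `T_{K/F} = {u ∈ T_K : u σ(u) = 1}`, where `σ` is the extension to `K_ℝ`
of the nontrivial `F`-automorphism of `K`. -/
def TKF (σ : RS K →+* RS K) : Set (RS K) := {u | IsUnit u ∧ u * σ u = 1}

/-- The `O_K`-lattice `u𝔄 ⊆ K_ℝ` for `u ∈ K_ℝ` and a fractional ideal `𝔄` of `K`. -/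
def latIdeal (A : FractionalIdeal (𝓞 K)⁰ K) (u : RS K) : AddSubgroup (RS K) where
  carrier := {w | ∃ α ∈ A, w = u * NumberField.mixedEmbedding K α}
  zero_mem' := ⟨0, Submodule.zero_mem _, by simp⟩
  add_mem' := by
    rintro w₁ w₂ ⟨α₁, hα₁, rfl⟩ ⟨α₂, hα₂, rfl⟩
    exact ⟨α₁ + α₂, Submodule.add_mem _ hα₁ hα₂, by rw [map_add, mul_add]⟩
  neg_mem' := by
    rintro w ⟨α, hα, rfl⟩
    exact ⟨-α, Submodule.neg_mem _ hα, by rw [map_neg, mul_neg]⟩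

/-- The lattice `ρ(u𝔄) ⊆ D_F`. -/
def rhoLat (ρ : RS K ≃+ DS F) (A : FractionalIdeal (𝓞 K)⁰ K) (u : RS K) :
    AddSubgroup (DS F) :=
  (latIdeal K A u).map ρ.toAddMonoidHom


/-- The canonical map `ι : F_ℝ → K_ℝ`: the continuous ring homomorphism compatible with the
embeddings of `F` and `K`. -/
def IsIota (ι : RS F →+* RS K) : Prop :=
  Continuous ι ∧ ∀ x : F,
    ι (NumberField.mixedEmbedding F x) = NumberField.mixedEmbedding K (algebraMap F K x)

/-- `σ : K_ℝ → K_ℝ` is the continuous extension of the nontrivial `F`-automorphism `τ` of `K`. -/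
def IsSigma (τ : K ≃ₐ[F] K) (σ : RS K →+* RS K) : Prop :=
  Continuous σ ∧ ∀ x : K,
    σ (NumberField.mixedEmbedding K x) = NumberField.mixedEmbedding K (τ x)

/-- `ρ : K_ℝ → D_F` is an isomorphism of `F_ℝ`-modules preserving the Haar measures and
satisfying `g = f ∘ ρ`. -/
def IsRho (ι : RS F →+* RS K) (ρ : RS K ≃+ DS F) : Prop :=
  (∀ (x : RS F) (w : RS K), ρ (ι x * w) = structureMap F x * ρ w) ∧
    MeasureTheory.MeasurePreserving ρ (measR K) (measD F) ∧
    ∀ w : RS K, fR K w = fD F (ρ w)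

/-- `S` is a set of norm-one representatives for `T_K/T_F` and `ν` is (supported on `S`)
the quotient Haar measure, characterized by the Fubini-type property
`∫_{T_K} φ = ∫_{T_K/T_F} ∫_{T_F} φ(t·ũ) dt du`. -/
def IsQuotMeasureK (ι : RS F →+* RS K) (ν : Measure (RS K)) (S : Set (RS K)) : Prop :=
  (∀ u ∈ S, u ∈ TF K ∧ normR K u = 1) ∧
    ∀ φ : RS K → ENNReal, Measurable φ →
      ∫⁻ t in TF K, φ t ∂(measT K) =
        ∫⁻ u in S, ∫⁻ t in TF F, φ (ι t * u) ∂(measT F) ∂ν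

/-- `S₀ ⊆ S` is a fundamental domain for the action of (the image of) `U_K` on `T_K/T_F`,
the latter quotient being represented by the set `S`. -/
def IsFundDomK (ι : RS F →+* RS K) (S S₀ : Set (RS K)) : Prop :=
  S₀ ⊆ S ∧ ∀ u ∈ S, ∃! u₀, u₀ ∈ S₀ ∧ ∃ (ε : (𝓞 K)ˣ) (t : RS F), IsUnit t ∧
    u = ι t * NumberField.mixedEmbedding K ((ε : 𝓞 K) : K) * u₀

/-- `L` is a section `T_{K/F} → T_K`, `u ↦ ũ`, with `ũ/ũ' = u` and `|N_{K/ℚ}(ũ)| = 1`,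
and `ν` is the Haar measure `d^×u` on `T_{K/F}`, characterized by the Fubini-type property
`∫_{T_K} φ(t) d^×t = ∫_{T_{K/F}} ∫_{T_F} φ(t·ũ) d^×t d^×u`. -/
def IsQuotMeasureKF (σ : RS K →+* RS K) (ι : RS F →+* RS K) (L : RS K → RS K)
    (ν : Measure (RS K)) : Prop :=
  (∀ u ∈ TKF K σ, L u ∈ TF K ∧ normR K (L u) = 1 ∧ L u = u * σ (L u)) ∧
    ∀ φ : RS K → ENNReal, Measurable φ →
      ∫⁻ t in TF K, φ t ∂(measT K) =
        ∫⁻ u in TKF K σ, ∫⁻ t in TF F, φ (ι t * L u) ∂(measT F) ∂ν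

/-- `S₀` is a fundamental domain for the multiplicative action of `U_{K/F}²` on `T_{K/F}`. -/
def IsFundDomKF (τ : K ≃ₐ[F] K) (σ : RS K →+* RS K) (S₀ : Set (RS K)) : Prop :=
  S₀ ⊆ TKF K σ ∧ ∀ u ∈ TKF K σ, ∃! u₀, u₀ ∈ S₀ ∧ ∃ δ : (𝓞 K)ˣ, δ ∈ UKF F K τ ∧
    u = NumberField.mixedEmbedding K ((((δ ^ 2 : (𝓞 K)ˣ) : 𝓞 K)) : K) * u₀

end Quadratic


/-! ### Riemann sums of Gaussians over a lattice -/

lemma exp_sq_sub_le {u v d : ℝ} (hu : 0 ≤ u) (hv : 0 ≤ v) (h : |v - u| ≤ d) :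
    |Real.exp (-u ^ 2) - Real.exp (-v ^ 2)| ≤
      Real.exp (d ^ 2) * (d * (2 + d)) * Real.exp (-(v ^ 2) / 4) := by
  have hd : 0 ≤ d := (abs_nonneg _).trans h
  obtain ⟨h1, h2⟩ := abs_le.mp h
  -- the mean value bound, with the smaller exponent bounded below by `v² / 2 - d²`
  have key : |Real.exp (-u ^ 2) - Real.exp (-v ^ 2)| ≤
      Real.exp (-(v ^ 2) / 2 + d ^ 2) * (d * (2 * v + d)) := by
    rcases le_total u v with huv | huv
    · have e1 : Real.exp (-v ^ 2) = Real.exp (-u ^ 2) * Real.exp (u ^ 2 - v ^ 2) := by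
        rw [← Real.exp_add]; ring_nf
      have e2 : u ^ 2 - v ^ 2 + 1 ≤ Real.exp (u ^ 2 - v ^ 2) := Real.add_one_le_exp _
      have e3 : Real.exp (-v ^ 2) ≤ Real.exp (-u ^ 2) := by
        apply Real.exp_le_exp.mpr; nlinarith
      rw [abs_of_nonneg (by linarith), e1]
      have e4 : Real.exp (-u ^ 2) ≤ Real.exp (-(v ^ 2) / 2 + d ^ 2) := by
        apply Real.exp_le_exp.mpr; nlinarith [sq_nonneg (u - d)]
      calc Real.exp (-u ^ 2) - Real.exp (-u ^ 2) * Real.exp (u ^ 2 - v ^ 2)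
          = Real.exp (-u ^ 2) * (1 - Real.exp (u ^ 2 - v ^ 2)) := by ring
        _ ≤ Real.exp (-u ^ 2) * (d * (2 * v + d)) := by
            apply mul_le_mul_of_nonneg_left _ (Real.exp_nonneg _)
            nlinarith
        _ ≤ _ := mul_le_mul_of_nonneg_right e4 (by positivity)
    · have e1 : Real.exp (-u ^ 2) = Real.exp (-v ^ 2) * Real.exp (v ^ 2 - u ^ 2) := by
        rw [← Real.exp_add]; ring_nf
      have e2 : v ^ 2 - u ^ 2 + 1 ≤ Real.exp (v ^ 2 - u ^ 2) := Real.add_one_le_exp _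
      have e3 : Real.exp (-u ^ 2) ≤ Real.exp (-v ^ 2) := by
        apply Real.exp_le_exp.mpr; nlinarith
      rw [abs_of_nonpos (by linarith), e1]
      have e4 : Real.exp (-v ^ 2) ≤ Real.exp (-(v ^ 2) / 2 + d ^ 2) := by
        apply Real.exp_le_exp.mpr; nlinarith
      calc -(Real.exp (-v ^ 2) * Real.exp (v ^ 2 - u ^ 2) - Real.exp (-v ^ 2))
          = Real.exp (-v ^ 2) * (1 - Real.exp (v ^ 2 - u ^ 2)) := by ring
        _ ≤ Real.exp (-v ^ 2) * (d * (2 * v + d)) := by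
            apply mul_le_mul_of_nonneg_left _ (Real.exp_nonneg _)
            nlinarith
        _ ≤ _ := mul_le_mul_of_nonneg_right e4 (by positivity)
  refine key.trans ?_
  have e5 : v * Real.exp (-(v ^ 2) / 4) ≤ 1 := by
    have := Real.add_one_le_exp (v ^ 2 / 4)
    rw [neg_div, Real.exp_neg]
    rw [← div_eq_mul_inv, div_le_one (Real.exp_pos _)]
    nlinarith [sq_nonneg (v / 2 - 1)]
  have e6 : Real.exp (-(v ^ 2) / 4) ≤ 1 := by
    rw [Real.exp_le_one_iff]; nlinarith [sq_nonneg v]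
  have e7 : Real.exp (-(v ^ 2) / 2 + d ^ 2) =
      Real.exp (d ^ 2) * Real.exp (-(v ^ 2) / 4) * Real.exp (-(v ^ 2) / 4) := by
    rw [← Real.exp_add, ← Real.exp_add]; ring_nf
  rw [e7]
  have e8 : Real.exp (-(v ^ 2) / 4) * (d * (2 * v + d)) ≤ d * (2 + d) := by
    nlinarith [mul_nonneg hd hd, mul_le_mul_of_nonneg_left e5 hd,
      mul_le_mul_of_nonneg_left e6 (mul_nonneg hd hd)]
  calc _ = Real.exp (d ^ 2) * Real.exp (-(v ^ 2) / 4) *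
        (Real.exp (-(v ^ 2) / 4) * (d * (2 * v + d))) := by ring
    _ ≤ Real.exp (d ^ 2) * Real.exp (-(v ^ 2) / 4) * (d * (2 + d)) := by gcongr
    _ = _ := by ring

section Riemann

variable {E : Type*} [AddCommGroup E] [MeasurableSpace E] [MeasurableAdd E] {μ : Measure E}
  [μ.IsAddLeftInvariant] {L : AddSubgroup E} [Countable L] {P : Set E}

open scoped Pointwise in
lemma hasSum_fundDom (hP : IsAddFundamentalDomain L P μ) {f : E → ℝ} (hf : Integrable f μ) :
    HasSum (fun l : L => ∫ p in P, f (l + p) ∂μ) (∫ x, f x ∂μ) := by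
  have h1 : HasSum (fun l : L => ∫ x in (l +ᵥ P), f x ∂μ) (∫ x, f x ∂μ) := by
    have := hP.sum_restrict
    have h2 := hasSum_integral_measure (μ := fun g : L => μ.restrict (g +ᵥ P)) (f := f)
      (by rw [this]; exact hf)
    rwa [this] at h2
  convert h1 using 2 with l
  exact ((measurePreserving_vadd l μ).setIntegral_image_emb
    (measurableEmbedding_const_vadd l) f P).symm

/-- A Riemann sum for `∫ exp (-ρ²)` over the translates of a fundamental domain on which the
seminorm-like function `ρ` varies by at most `d`: the error is of order `d ∫ exp (-ρ² / 4)`. -/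
lemma riemann_sum (hP : IsAddFundamentalDomain L P μ) {V : ℝ} (hV : 0 < V)
    (hPV : μ P = ENNReal.ofReal V) {ρ : E → ℝ} (hρ0 : ∀ x, 0 ≤ ρ x) {d : ℝ}
    (hd : ∀ x, ∀ p ∈ P, |ρ (x + p) - ρ x| ≤ d)
    (h1 : Integrable (fun x => Real.exp (-ρ x ^ 2)) μ)
    (h4 : Integrable (fun x => Real.exp (-(ρ x ^ 2) / 4)) μ) :
    Summable (fun l : L => Real.exp (-ρ l ^ 2)) ∧
    |V * ∑' l : L, Real.exp (-ρ l ^ 2) - ∫ x, Real.exp (-ρ x ^ 2) ∂μ| ≤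
      Real.exp (d ^ 2) * (d * (2 + d)) * ∫ x, Real.exp (-(ρ x ^ 2) / 4) ∂μ := by
  have s1 := hasSum_fundDom hP h1
  have s4 := (hasSum_fundDom hP h4).mul_left (Real.exp (d ^ 2) * (d * (2 + d)))
  have hPfin : μ P ≠ ⊤ := by rw [hPV]; exact ENNReal.ofReal_ne_top
  have tr : ∀ {f : E → ℝ}, Integrable f μ → ∀ l : L,
      IntegrableOn (fun p => f (l + p)) P μ := fun hf l => (hf.comp_add_left (l : E)).integrableOn
  have hdiff : ∀ l : L, V * Real.exp (-ρ l ^ 2) - ∫ p in P, Real.exp (-ρ (l + p) ^ 2) ∂μ =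
      ∫ p in P, (Real.exp (-ρ l ^ 2) - Real.exp (-ρ (l + p) ^ 2)) ∂μ := by
    intro l
    have hc : IntegrableOn (fun _ : E => Real.exp (-ρ l ^ 2)) P μ := integrableOn_const hPfin
    rw [integral_sub hc (tr h1 l)]
    simp [Measure.real, hPV, hV.le]
  have hbd : ∀ l : L, |V * Real.exp (-ρ l ^ 2) - ∫ p in P, Real.exp (-ρ (l + p) ^ 2) ∂μ| ≤
      Real.exp (d ^ 2) * (d * (2 + d)) * ∫ p in P, Real.exp (-(ρ (l + p) ^ 2) / 4) ∂μ := by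
    intro l
    rw [hdiff, ← integral_const_mul]
    have hc : IntegrableOn (fun _ : E => Real.exp (-ρ l ^ 2)) P μ := integrableOn_const hPfin
    have hi : IntegrableOn (fun p => Real.exp (d ^ 2) * (d * (2 + d)) *
      Real.exp (-(ρ (l + p) ^ 2) / 4)) P μ := (tr h4 l).const_mul _
    refine (abs_integral_le_integral_abs).trans ?_
    have hae : ∀ᵐ p ∂(μ.restrict P), p ∈ P := ae_restrict_mem₀ hP.nullMeasurableSet
    refine integral_mono_ae (hc.sub (tr h1 l)).abs hi ?_
    filter_upwards [hae] with p hp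
    exact exp_sq_sub_le (hρ0 _) (hρ0 _) (hd l p hp)
  have sdiff : Summable fun l : L =>
      V * Real.exp (-ρ l ^ 2) - ∫ p in P, Real.exp (-ρ (l + p) ^ 2) ∂μ :=
    Summable.of_norm_bounded s4.summable hbd
  have sV : Summable fun l : L => V * Real.exp (-ρ l ^ 2) := by
    simpa using sdiff.add s1.summable
  have sS : Summable (fun l : L => Real.exp (-ρ l ^ 2)) := by
    simpa [hV.ne'] using sV.mul_left V⁻¹
  refine ⟨sS, ?_⟩
  rw [← s1.tsum_eq, ← tsum_mul_left, ← integral_const_mul, ← sV.tsum_sub s1.summable,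
    integral_const_mul, ← (hasSum_fundDom hP h4).tsum_eq, ← tsum_mul_left]
  exact tsum_of_norm_bounded (f := fun l : L =>
      V * Real.exp (-ρ l ^ 2) - ∫ p in P, Real.exp (-ρ (l + p) ^ 2) ∂μ) (s4.summable.hasSum) hbd

end Riemann

/-! ### The space `F_ℝ`, its norm and the fundamental cone of the units -/

lemma normR_eq (x : RS F) : normR F x = mixedEmbedding.norm x := by
  classical
  rw [mixedEmbedding.norm_apply, InfinitePlace.prod_eq_prod_mul_prod]
  unfold normR
  congr 1
  · refine Finset.prod_congr (by ext; simp) fun w _ => ?_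
    rw [mixedEmbedding.normAtPlace_apply_of_isReal w.2]
    simp [InfinitePlace.mult, w.2]
  · refine Finset.prod_congr (by ext; simp) fun w _ => ?_
    rw [mixedEmbedding.normAtPlace_apply_of_isComplex w.2]
    simp [InfinitePlace.mult, InfinitePlace.not_isReal_iff_isComplex.mpr w.2]

lemma normR_nonneg (x : RS F) : 0 ≤ normR F x := by
  rw [normR_eq]; exact mixedEmbedding.norm_nonneg x

lemma normR_mul (x y : RS F) : normR F (x * y) = normR F x * normR F y := by
  simp only [normR_eq, map_mul]

lemma isUnit_iff_forall (x : RS F) : IsUnit x ↔ (∀ v, x.1 v ≠ 0) ∧ ∀ v, x.2 v ≠ 0 := by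
  rw [Prod.isUnit_iff, Pi.isUnit_iff, Pi.isUnit_iff]
  simp only [isUnit_iff_ne_zero]

lemma normR_ne_zero_iff (x : RS F) : normR F x ≠ 0 ↔ IsUnit x := by
  rw [isUnit_iff_forall]
  simp [normR, Finset.prod_ne_zero_iff]

lemma normR_pos {x : RS F} (hx : x ∈ TF F) : 0 < normR F x :=
  lt_of_le_of_ne (normR_nonneg F x) ((normR_ne_zero_iff F x).mpr hx).symm

lemma continuous_normR : Continuous (normR F) := by
  unfold normR
  fun_prop

lemma measurable_normR : Measurable (normR F) := by
  unfold normR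
  fun_prop

lemma TF_eq : TF F = {x | normR F x ≠ 0} := by
  ext x; exact (normR_ne_zero_iff F x).symm

lemma measurableSet_TF : MeasurableSet (TF F) := by
  rw [TF_eq]
  exact (measurable_normR F) (measurableSet_singleton (0 : ℝ)).compl

/-- The fundamental cone of Mathlib: the quotient of `F_ℝ^×` by the units modulo torsion. -/
def cone : Set (RS F) := mixedEmbedding.fundamentalCone F

lemma measurableSet_cone : MeasurableSet (cone F) :=
  mixedEmbedding.measurableSet_fundamentalCone F

lemma cone_subset : cone F ⊆ TF F := fun x hx => by
  rw [TF_eq]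
  change normR F x ≠ 0
  rw [normR_eq]
  exact hx.2

/-- The degree `[F : ℚ]`. -/
def deg : ℕ := Module.finrank ℚ F

lemma deg_pos : 0 < deg F := Module.finrank_pos

lemma normR_smul (c : ℝ) (x : RS F) : normR F (c • x) = |c| ^ deg F * normR F x := by
  rw [normR_eq, normR_eq]; exact mixedEmbedding.norm_smul c x

/-- The length scale `|N(t)| ^ (1/n)` of a point `t` of `F_ℝ`. -/
def scale (t : RS F) : ℝ := normR F t ^ ((deg F : ℝ)⁻¹)

lemma scale_pow {t : RS F} : scale F t ^ deg F = normR F t :=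
  Real.rpow_inv_natCast_pow (normR_nonneg F t) (deg_pos F).ne'

lemma scale_pos {t : RS F} (ht : t ∈ TF F) : 0 < scale F t :=
  Real.rpow_pos_of_pos (normR_pos F ht) _

lemma mem_normLeOne_of_mem_cone {t : RS F} (ht : t ∈ cone F) :
    (scale F t)⁻¹ • t ∈ mixedEmbedding.fundamentalCone.normLeOne F ∧
      normR F ((scale F t)⁻¹ • t) = 1 := by
  have hs := scale_pos F (cone_subset F ht)
  have h1 : normR F ((scale F t)⁻¹ • t) = 1 := by
    rw [normR_smul, abs_of_pos (inv_pos.mpr hs), inv_pow, scale_pow]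
    exact inv_mul_cancel₀ (normR_pos F (cone_subset F ht)).ne'
  refine ⟨?_, h1⟩
  rw [mixedEmbedding.fundamentalCone.mem_normLeOne]
  refine ⟨mixedEmbedding.fundamentalCone.smul_mem_of_mem ht (inv_pos.mpr hs).ne', ?_⟩
  rw [← normR_eq, h1]

lemma exists_normLeOne_bound : ∃ B : ℝ, 1 ≤ B ∧
    ∀ t ∈ mixedEmbedding.fundamentalCone.normLeOne F, ∀ w, mixedEmbedding.normAtPlace w t ≤ B := by
  classical
  obtain ⟨B, hB⟩ := isBounded_iff_forall_norm_le.mp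
    (mixedEmbedding.fundamentalCone.isBounded_normLeOne F)
  refine ⟨max B 1, le_max_right _ _, fun t ht w => ?_⟩
  refine le_trans ?_ ((hB t ht).trans (le_max_left _ _))
  rw [mixedEmbedding.norm_eq_sup'_normAtPlace]
  exact Finset.le_sup' (fun w => mixedEmbedding.normAtPlace w t) (Finset.mem_univ w)

/-- On the cone every coordinate of `t` is comparable with `|N(t)| ^ (1/n)`; this is where
Dirichlet's unit theorem enters. -/
lemma exists_cone_bounds : ∃ b B : ℝ, 0 < b ∧ 0 < B ∧ ∀ t ∈ cone F,
    (∀ v, b * scale F t ≤ |t.1 v| ∧ |t.1 v| ≤ B * scale F t) ∧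
    ∀ v, b * scale F t ≤ ‖t.2 v‖ ∧ ‖t.2 v‖ ≤ B * scale F t := by
  classical
  obtain ⟨B, hB1, hB⟩ := exists_normLeOne_bound F
  have hB0 : 0 < B := by linarith
  set m : ℕ := ∑ w : InfinitePlace F, w.mult with hm
  have hplace : ∀ t ∈ cone F, ∀ w,
      (B ^ m)⁻¹ * scale F t ≤ mixedEmbedding.normAtPlace w t ∧
        mixedEmbedding.normAtPlace w t ≤ B * scale F t := by
    intro t ht w
    have hs := scale_pos F (cone_subset F ht)
    obtain ⟨hu, hN⟩ := mem_normLeOne_of_mem_cone F ht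
    set u := (scale F t)⁻¹ • t with hudef
    have htu : t = scale F t • u := by rw [hudef, smul_inv_smul₀ hs.ne']
    have hwt : mixedEmbedding.normAtPlace w t = scale F t * mixedEmbedding.normAtPlace w u := by
      conv_lhs => rw [htu]
      rw [mixedEmbedding.normAtPlace_smul, abs_of_pos hs]
    have hub := hB u hu
    have h0 : ∀ w, 0 ≤ mixedEmbedding.normAtPlace w u := fun w =>
      mixedEmbedding.normAtPlace_nonneg w u
    have hlow : (B ^ m)⁻¹ ≤ mixedEmbedding.normAtPlace w u := by
      rw [inv_le_iff_one_le_mul₀ (by positivity)]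
      by_contra! hlt
      have hw1 : mixedEmbedding.normAtPlace w u ≤ 1 := by
        by_contra! h
        have : 1 ≤ B ^ m := one_le_pow₀ hB1
        nlinarith
      rw [normR_eq, mixedEmbedding.norm_apply] at hN
      have : ∏ w, mixedEmbedding.normAtPlace w u ^ w.mult ≤
          mixedEmbedding.normAtPlace w u * B ^ m := by
        rw [← Finset.mul_prod_erase _ _ (Finset.mem_univ w)]
        refine mul_le_mul ?_ ?_ (Finset.prod_nonneg fun i _ => pow_nonneg (h0 i) _) (h0 w)
        · exact pow_le_of_le_one (h0 w) hw1 w.mult_ne_zero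
        · calc _ ≤ ∏ i ∈ Finset.univ.erase w, B ^ i.mult :=
                Finset.prod_le_prod (fun i _ => pow_nonneg (h0 i) _)
                  fun i _ => pow_le_pow_left₀ (h0 i) (hub i) _
            _ = B ^ (∑ i ∈ Finset.univ.erase w, i.mult) := Finset.prod_pow_eq_pow_sum _ _ _
            _ ≤ B ^ m := pow_le_pow_right₀ hB1
                (Finset.sum_le_sum_of_subset (Finset.erase_subset _ _))
      rw [hN] at this
      linarith
    rw [hwt]
    constructor
    · rw [mul_comm]; exact mul_le_mul_of_nonneg_left hlow hs.le
    · rw [mul_comm]; exact mul_le_mul_of_nonneg_right (hub w) hs.le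
  refine ⟨(B ^ m)⁻¹, B, by positivity, hB0, fun t ht => ⟨fun v => ?_, fun v => ?_⟩⟩
  · have := hplace t ht v.1
    rwa [mixedEmbedding.normAtPlace_apply_of_isReal v.2] at this
  · have := hplace t ht v.1
    rwa [mixedEmbedding.normAtPlace_apply_of_isComplex v.2] at this

/-! ### Haar measures on `F_ℝ` -/

lemma sigmaFinite_smul {α : Type} [MeasurableSpace α] (μ : Measure α) [SigmaFinite μ]
    {c : ENNReal} (hc : c ≠ ⊤) : SigmaFinite (c • μ) := by
  lift c to NNReal using hc
  exact (inferInstance : SigmaFinite (c • μ))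

lemma pi_smul_measure {ι α : Type} [Fintype ι] [MeasurableSpace α] (μ : Measure α) [SigmaFinite μ]
    (c : ENNReal) (hc : c ≠ ⊤) :
    Measure.pi (fun _ : ι => c • μ) = c ^ Fintype.card ι • Measure.pi fun _ : ι => μ := by
  have : SigmaFinite (c • μ) := sigmaFinite_smul μ hc
  refine Measure.pi_eq fun s _ => ?_
  simp [Measure.pi_pi, Finset.prod_mul_distrib]

open scoped Classical in
lemma measR_eq : measR F =
    (2 : ENNReal) ^ InfinitePlace.nrComplexPlaces F • (volume : Measure (mixedEmbedding.mixedSpace F)) := by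
  unfold measR
  rw [pi_smul_measure _ _ (by simp), Measure.prod_smul_right]
  congr 1

/-- `2^{r₁} (2π)^{r₂} R_F`, which is `w_F C_F`. -/
def coneVol : ℝ := 2 ^ InfinitePlace.nrRealPlaces F * (2 * Real.pi) ^ InfinitePlace.nrComplexPlaces F *
  Units.regulator F

lemma coneVol_pos : 0 < coneVol F := by
  unfold coneVol
  have := Units.regulator_pos F
  positivity

lemma coneVol_eq : coneVol F = CF F * Units.torsionOrder F := by
  have : (Units.torsionOrder F : ℝ) ≠ 0 := by
    exact_mod_cast (Units.torsionOrder_pos F).ne'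
  unfold coneVol CF
  rw [div_mul_cancel₀ _ this]

open scoped Pointwise in
lemma measR_cone_le (X : ℝ) (hX : 0 ≤ X) :
    measR F (cone F ∩ {t | normR F t ≤ X}) = ENNReal.ofReal (coneVol F * X) := by
  classical
  rcases hX.eq_or_lt with rfl | hX
  · rw [mul_zero, ENNReal.ofReal_zero]
    convert measure_empty (μ := measR F)
    ext t
    simp only [Set.mem_inter_iff, Set.mem_ofPred_eq, Set.mem_empty_iff_false, iff_false, not_and,
      not_le]
    exact fun ht => normR_pos F (cone_subset F ht)
  have hn := deg_pos F
  set c : ℝ := X ^ ((deg F : ℝ)⁻¹) with hc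
  have hc0 : 0 < c := Real.rpow_pos_of_pos hX _
  have hcX : c ^ deg F = X := Real.rpow_inv_natCast_pow hX.le hn.ne'
  have hset : cone F ∩ {t | normR F t ≤ X} = c • mixedEmbedding.fundamentalCone.normLeOne F := by
    ext t
    rw [Set.mem_smul_set_iff_inv_smul_mem₀ hc0.ne', mixedEmbedding.fundamentalCone.mem_normLeOne,
      mixedEmbedding.fundamentalCone.smul_mem_iff_mem (inv_pos.mpr hc0).ne', ← normR_eq,
      normR_smul, abs_of_pos (inv_pos.mpr hc0), inv_pow, hcX, inv_mul_le_iff₀ hX, mul_one]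
    rfl
  rw [hset, measR_eq, Measure.smul_apply, Measure.addHaar_smul, mixedEmbedding.finrank,
    mixedEmbedding.fundamentalCone.volume_normLeOne]
  change _ • (ENNReal.ofReal |c ^ deg F| * _) = _
  rw [hcX, abs_of_pos hX, smul_eq_mul, coneVol, mul_pow,
    ENNReal.ofReal_mul (by have := Units.regulator_pos F; positivity),
    ENNReal.ofReal_mul (by positivity), ENNReal.ofReal_mul (by positivity),
    ENNReal.ofReal_mul (by positivity), ENNReal.ofReal_pow (by positivity),
    ENNReal.ofReal_pow (by positivity), ENNReal.ofReal_pow (by positivity)]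
  have : (NNReal.pi : ENNReal) = ENNReal.ofReal Real.pi := by
    rw [← NNReal.coe_real_pi, ENNReal.ofReal_coe_nnreal]
  rw [this]
  simp only [ENNReal.ofReal_ofNat]
  ring

/-- The distribution of the norm on the fundamental cone. -/
lemma map_normR_measR : ((measR F).restrict (cone F)).map (normR F) =
    ENNReal.ofReal (coneVol F) • volume.restrict (Set.Ioi (0 : ℝ)) := by
  have hle : ∀ x : ℝ, ((measR F).restrict (cone F)).map (normR F) (Set.Iic x) =
      ENNReal.ofReal (coneVol F) * ENNReal.ofReal x := by
    intro x
    rw [Measure.map_apply (measurable_normR F) measurableSet_Iic,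
      Measure.restrict_apply ((measurable_normR F) measurableSet_Iic)]
    rcases le_total 0 x with h | h
    · rw [← ENNReal.ofReal_mul (coneVol_pos F).le, ← measR_cone_le F x h, Set.inter_comm]
      rfl
    · rw [ENNReal.ofReal_of_nonpos h, mul_zero]
      convert measure_empty (μ := measR F)
      ext t
      simp only [Set.mem_inter_iff, Set.mem_preimage, Set.mem_Iic, Set.mem_empty_iff_false,
        iff_false, not_and]
      exact fun ht ht' => (normR_pos F (cone_subset F ht')).not_ge (ht.trans h)
  have hfin : ∀ x : ℝ, ((measR F).restrict (cone F)).map (normR F) (Set.Iic x) ≠ ⊤ := fun x => by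
    rw [hle]; exact ENNReal.mul_ne_top ENNReal.ofReal_ne_top ENNReal.ofReal_ne_top
  refine Measure.ext_of_Ioc' _ _
    (fun a b _ => measure_ne_top_of_subset Set.Ioc_subset_Iic_self (hfin b)) fun a b hab => ?_
  have hd : Set.Ioc a b = Set.Iic b \ Set.Iic a := by
    ext x; simp [and_comm]
  rw [hd, measure_sdiff (Set.Iic_subset_Iic.mpr hab.le)
    measurableSet_Iic.nullMeasurableSet (hfin a), hle, hle, ← hd, Measure.smul_apply,
    Measure.restrict_apply measurableSet_Ioc, Set.Ioc_inter_Ioi, Real.volume_Ioc, smul_eq_mul,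
    ← ENNReal.mul_sub (fun _ _ => ENNReal.ofReal_ne_top)]
  congr 1
  rcases le_total 0 a with h | h
  · rw [max_eq_left h, ENNReal.ofReal_sub _ h]
  · rw [max_eq_right h, ENNReal.ofReal_of_nonpos h, sub_zero, tsub_zero]

lemma lintegral_cone (φ : ℝ → ENNReal) (hφ : Measurable φ) :
    ∫⁻ t in cone F, φ (normR F t) ∂(measT F) =
      ENNReal.ofReal (coneVol F) * ∫⁻ x in Set.Ioi (0 : ℝ), φ x * ENNReal.ofReal (1 / x) := by
  have hm : Measurable fun t => ENNReal.ofReal (1 / normR F t) := by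
    have := measurable_normR F
    fun_prop
  rw [measT, restrict_withDensity (measurableSet_cone F),
    lintegral_withDensity_eq_lintegral_mul (g := fun t => φ (normR F t)) _ hm
      (hφ.comp (measurable_normR F))]
  have := lintegral_map (μ := (measR F).restrict (cone F))
    (f := fun x => φ x * ENNReal.ofReal (1 / x)) (g := normR F) (by fun_prop) (measurable_normR F)
  rw [map_normR_measR, lintegral_smul_measure] at this
  rw [← smul_eq_mul (ENNReal.ofReal _), this]
  exact lintegral_congr fun t => mul_comm _ _

lemma map_normR_measT : ((measT F).restrict (cone F)).map (normR F) =
    ENNReal.ofReal (coneVol F) •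
      (volume.restrict (Set.Ioi (0 : ℝ))).withDensity fun x => ENNReal.ofReal (1 / x) := by
  refine Measure.ext fun s hs => ?_
  rw [← lintegral_indicator_one hs, lintegral_map (measurable_one.indicator hs) (measurable_normR F),
    lintegral_cone F _ (measurable_one.indicator hs), Measure.smul_apply, smul_eq_mul,
    withDensity_apply _ hs, ← lintegral_indicator hs]
  congr 1
  refine lintegral_congr fun x => ?_
  by_cases hx : x ∈ s <;> simp [hx]

/-! ### The multiplicative measure on `F_ℝ^×` and the action of the units -/

lemma pi_smul_measure' {ι α : Type} [Fintype ι] [MeasurableSpace α] (μ : Measure α) [SigmaFinite μ]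
    (c : ι → ENNReal) (hc : ∀ i, c i ≠ ⊤) :
    Measure.pi (fun i : ι => c i • μ) = (∏ i, c i) • Measure.pi fun _ : ι => μ := by
  have : ∀ i, SigmaFinite (c i • μ) := fun i => sigmaFinite_smul μ (hc i)
  refine Measure.pi_eq fun s _ => ?_
  simp [Measure.pi_pi, Finset.prod_mul_distrib]

lemma map_complex_mul {c : ℂ} (hc : c ≠ 0) :
    Measure.map (fun x => c * x) (volume : Measure ℂ) = ENNReal.ofReal ((‖c‖ ^ 2)⁻¹) • volume := by
  have hdet : LinearMap.det (LinearMap.mulLeft ℝ c) = ‖c‖ ^ 2 := by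
    have := Algebra.norm_complex_apply c
    rw [Algebra.norm_apply] at this
    rw [← Complex.normSq_eq_norm_sq, ← this]
    rfl
  have h := Measure.map_linearMap_addHaar_eq_smul_addHaar (volume : Measure ℂ)
    (f := LinearMap.mulLeft ℝ c) (by rw [hdet]; positivity)
  rw [hdet, abs_of_nonneg (by positivity)] at h
  exact h

lemma map_mul_measR {c : RS F} (hc : c ∈ TF F) :
    (measR F).map (fun t => c * t) = ENNReal.ofReal ((normR F c)⁻¹) • measR F := by
  obtain ⟨h1, h2⟩ := (isUnit_iff_forall F c).mp hc
  have e2 : ∀ v, Measure.map (fun x => c.2 v * x) ((2 : ENNReal) • (volume : Measure ℂ)) =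
      ENNReal.ofReal ((‖c.2 v‖ ^ 2)⁻¹) • (2 : ENNReal) • (volume : Measure ℂ) := fun v => by
    rw [Measure.map_smul, map_complex_mul (h2 v), smul_comm]
  have hs2 : SigmaFinite ((2 : ENNReal) • (volume : Measure ℂ)) := sigmaFinite_smul _ (by simp)
  have s1 : ∀ v, SigmaFinite (Measure.map (fun x => c.1 v * x) (volume : Measure ℝ)) := fun v => by
    rw [Real.map_volume_mul_left (h1 v)]; exact sigmaFinite_smul _ ENNReal.ofReal_ne_top
  have s2 : ∀ v, SigmaFinite (Measure.map (fun x => c.2 v * x)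
      ((2 : ENNReal) • (volume : Measure ℂ))) := fun v => by
    rw [e2]; exact sigmaFinite_smul _ ENNReal.ofReal_ne_top
  have p1 : Measure.map (fun (x : {v : InfinitePlace F // v.IsReal} → ℝ) v => c.1 v * x v)
      (Measure.pi fun _ => volume) = (∏ v, ENNReal.ofReal |(c.1 v)⁻¹|) • Measure.pi fun _ => volume := by
    rw [Measure.pi_map_pi (f := fun v x => c.1 v * x) fun v => by fun_prop,
      ← pi_smul_measure' _ _ fun _ => ENNReal.ofReal_ne_top]
    congr 1
    ext1 v
    exact Real.map_volume_mul_left (h1 v)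
  have p2 : Measure.map (fun (x : {v : InfinitePlace F // v.IsComplex} → ℂ) v => c.2 v * x v)
      (Measure.pi fun _ => (2 : ENNReal) • (volume : Measure ℂ)) =
        (∏ v, ENNReal.ofReal ((‖c.2 v‖ ^ 2)⁻¹)) •
          Measure.pi fun _ => (2 : ENNReal) • (volume : Measure ℂ) := by
    rw [Measure.pi_map_pi (f := fun v x => c.2 v * x) fun v => by fun_prop,
      ← pi_smul_measure' _ _ fun _ => ENNReal.ofReal_ne_top]
    congr 1
    ext1 v
    exact e2 v
  have key := Measure.map_prod_map
    (f := fun (x : {v : InfinitePlace F // v.IsReal} → ℝ) v => c.1 v * x v)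
    (g := fun (x : {v : InfinitePlace F // v.IsComplex} → ℂ) v => c.2 v * x v)
    (Measure.pi fun _ => (volume : Measure ℝ))
    (Measure.pi fun _ => (2 : ENNReal) • (volume : Measure ℂ)) (by fun_prop) (by fun_prop)
  rw [p1, p2, Measure.prod_smul_left, Measure.prod_smul_right, smul_smul] at key
  have hN : ENNReal.ofReal ((normR F c)⁻¹) =
      (∏ v, ENNReal.ofReal |(c.1 v)⁻¹|) * ∏ v, ENNReal.ofReal ((‖c.2 v‖ ^ 2)⁻¹) := by
    rw [← ENNReal.ofReal_prod_of_nonneg fun _ _ => abs_nonneg _,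
      ← ENNReal.ofReal_prod_of_nonneg fun _ _ => by positivity,
      ← ENNReal.ofReal_mul (Finset.prod_nonneg fun _ _ => abs_nonneg _), normR, mul_inv]
    simp [abs_inv]
  rw [hN]
  exact key.symm

/-- The measure `d^×t` on `T_F`, viewed on `F_ℝ`. -/
def mu0 : Measure (RS F) := (measT F).restrict (TF F)

lemma lintegral_mu0 (φ : RS F → ENNReal) (hφ : Measurable φ) :
    ∫⁻ t, φ t ∂mu0 F =
      ∫⁻ t, (TF F).indicator (fun t => ENNReal.ofReal (1 / normR F t) * φ t) t ∂measR F := by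
  have hm : Measurable fun t => ENNReal.ofReal (1 / normR F t) := by
    have := measurable_normR F
    fun_prop
  rw [mu0, measT, restrict_withDensity (measurableSet_TF F),
    lintegral_withDensity_eq_lintegral_mul _ hm hφ, lintegral_indicator (measurableSet_TF F)]
  rfl

lemma measurePreserving_mul {c : RS F} (hc : c ∈ TF F) :
    MeasurePreserving (fun t => c * t) (mu0 F) (mu0 F) := by
  have hcm : Measurable fun t : RS F => c * t := by fun_prop
  refine ⟨hcm, Measure.ext fun s hs => ?_⟩
  have hm : Measurable fun t => ENNReal.ofReal (1 / normR F t) := by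
    have := measurable_normR F
    fun_prop
  have hs1 : Measurable (s.indicator (1 : RS F → ENNReal)) := measurable_one.indicator hs
  have hN := normR_pos F hc
  rw [← lintegral_indicator_one hs, lintegral_map hs1 hcm, ← lintegral_indicator_one hs,
    lintegral_mu0 F (fun t => s.indicator 1 (c * t)) (hs1.comp hcm), lintegral_mu0 F _ hs1]
  have key := lintegral_map (μ := measR F) (g := fun t => c * t)
    (f := (TF F).indicator fun t => ENNReal.ofReal (1 / normR F t) * s.indicator 1 t)
    ((hm.mul hs1).indicator (measurableSet_TF F)) hcm
  rw [map_mul_measR F hc, lintegral_smul_measure] at key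
  have h2 : ∀ t, (TF F).indicator
      (fun t => ENNReal.ofReal (1 / normR F t) * s.indicator 1 (c * t)) t =
      ENNReal.ofReal (normR F c) * (TF F).indicator
        (fun t => ENNReal.ofReal (1 / normR F t) * s.indicator (1 : RS F → ENNReal) t) (c * t) := by
    intro t
    have hiff : c * t ∈ TF F ↔ t ∈ TF F := by
      simp only [TF, Set.mem_ofPred_eq]
      exact ⟨fun h => isUnit_of_mul_isUnit_right h, fun h => hc.mul h⟩
    by_cases ht : t ∈ TF F
    · rw [Set.indicator_of_mem ht, Set.indicator_of_mem (hiff.mpr ht), ← mul_assoc,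
        ← ENNReal.ofReal_mul hN.le, normR_mul]
      congr 2
      field_simp
    · rw [Set.indicator_of_notMem ht, Set.indicator_of_notMem (mt hiff.mp ht), mul_zero]
  rw [lintegral_congr h2, lintegral_const_mul' _ _ ENNReal.ofReal_ne_top, ← key, smul_eq_mul,
    ← mul_assoc, ← ENNReal.ofReal_mul hN.le, mul_inv_cancel₀ hN.ne', ENNReal.ofReal_one, one_mul]

/-- The image of a unit of `𝓞 F` in `F_ℝ`. -/
def unitR (ε : (𝓞 F)ˣ) : RS F := mixedEmbedding F ((ε : 𝓞 F) : F)

lemma unitR_mul (ε δ : (𝓞 F)ˣ) : unitR F (ε * δ) = unitR F ε * unitR F δ := by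
  simp [unitR]

lemma unitR_one : unitR F 1 = 1 := by simp [unitR]

lemma unitR_mem (ε : (𝓞 F)ˣ) : unitR F ε ∈ TF F :=
  IsUnit.of_mul_eq_one (unitR F ε⁻¹) (by rw [← unitR_mul, mul_inv_cancel, unitR_one])

lemma normR_unitR (ε : (𝓞 F)ˣ) : normR F (unitR F ε) = 1 := by
  rw [normR_eq, unitR]
  exact mixedEmbedding.norm_unit ε

instance : Countable (𝓞 F)ˣ := by
  have : Countable (𝓞 F) := by
    exact (Module.Free.chooseBasis ℤ (𝓞 F)).equivFun.toEquiv.countable_iff.mpr inferInstance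
  exact Units.val_injective.countable

lemma tsum_indicator_cone {t : RS F} (ht : t ∈ TF F) :
    ∑' ε : (𝓞 F)ˣ, (cone F).indicator (1 : RS F → ENNReal) (unitR F ε⁻¹ * t) =
      (Units.torsionOrder F : ENNReal) := by
  classical
  have hN : mixedEmbedding.norm t ≠ 0 := by
    rw [← normR_eq]; exact (normR_pos F ht).ne'
  obtain ⟨u, hu⟩ := mixedEmbedding.fundamentalCone.exists_unit_smul_mem hN
  have hmem : ∀ ε : (𝓞 F)ˣ, unitR F ε⁻¹ * t ∈ cone F ↔ ε⁻¹ * u⁻¹ ∈ Units.torsion F := by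
    intro ε
    rw [← mixedEmbedding.fundamentalCone.unit_smul_mem_iff_mem_torsion hu, smul_smul,
      inv_mul_cancel_right]
    rfl
  rw [← (((Equiv.inv (𝓞 F)ˣ).trans (Equiv.mulRight u⁻¹)).symm.tsum_eq
    fun ε => (cone F).indicator (1 : RS F → ENNReal) (unitR F ε⁻¹ * t))]
  have h2 : ∀ ε : (𝓞 F)ˣ, (cone F).indicator (1 : RS F → ENNReal)
      (unitR F (((Equiv.inv (𝓞 F)ˣ).trans (Equiv.mulRight u⁻¹)).symm ε)⁻¹ * t) =
        (Units.torsion F : Set (𝓞 F)ˣ).indicator 1 ε := by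
    intro ε
    have h := hmem (((Equiv.inv (𝓞 F)ˣ).trans (Equiv.mulRight u⁻¹)).symm ε)
    have h3 : (((Equiv.inv (𝓞 F)ˣ).trans (Equiv.mulRight u⁻¹)).symm ε)⁻¹ * u⁻¹ = ε := by
      simp
    rw [h3] at h
    by_cases hε : ε ∈ Units.torsion F
    · rw [Set.indicator_of_mem (h.mpr hε), Set.indicator_of_mem (by exact hε)]; rfl
    · rw [Set.indicator_of_notMem (mt h.mp hε), Set.indicator_of_notMem (by exact hε)]
  rw [tsum_congr h2, ← tsum_subtype]
  simp only [Pi.one_apply, ENNReal.tsum_one]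
  have : Finite ((Units.torsion F : Set (𝓞 F)ˣ)) := inferInstanceAs (Finite (Units.torsion F))
  rw [Units.torsionOrder, ENat.card_eq_coe_natCard]
  simp

/-- The units translate the cone over `T_F`, covering almost every (in fact every) point
`w_F` times. -/
lemma torsionOrder_smul_mu0 : (Units.torsionOrder F : ENNReal) • mu0 F =
    Measure.sum fun ε : (𝓞 F)ˣ => ((measT F).restrict (cone F)).map fun t => unitR F ε * t := by
  have hcone : (measT F).restrict (cone F) = (mu0 F).restrict (cone F) := by
    rw [mu0, Measure.restrict_restrict (measurableSet_cone F),
      Set.inter_eq_self_of_subset_left (cone_subset F)]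
  refine Measure.ext fun s hs => ?_
  rw [Measure.sum_apply _ hs, hcone, Measure.smul_apply, smul_eq_mul]
  have h1 : ∀ ε : (𝓞 F)ˣ, ((mu0 F).restrict (cone F)).map (fun t => unitR F ε * t) s =
      ∫⁻ t, s.indicator (fun t => (cone F).indicator 1 (unitR F ε⁻¹ * t)) t ∂mu0 F := by
    intro ε
    have hm : Measurable fun t : RS F => unitR F ε * t := by fun_prop
    have hm' : Measurable fun t : RS F => unitR F ε⁻¹ * t := by fun_prop
    have hmeas : Measurable (s.indicator
        (fun t => (cone F).indicator (1 : RS F → ENNReal) (unitR F ε⁻¹ * t))) :=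
      ((measurable_one.indicator (measurableSet_cone F)).comp hm').indicator hs
    rw [Measure.map_apply hm hs, Measure.restrict_apply (hm hs),
      ← (measurePreserving_mul F (unitR_mem F ε)).lintegral_comp hmeas,
      ← lintegral_indicator_one ((hm hs).inter (measurableSet_cone F))]
    refine lintegral_congr fun t => ?_
    have : unitR F ε⁻¹ * (unitR F ε * t) = t := by
      rw [← mul_assoc, ← unitR_mul, inv_mul_cancel, unitR_one, one_mul]
    by_cases h1 : unitR F ε * t ∈ s <;> by_cases h2 : t ∈ cone F <;>
      simp [Set.indicator, h1, h2, this]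
  rw [tsum_congr h1, ← lintegral_tsum]
  swap
  · intro ε
    have hm' : Measurable fun t : RS F => unitR F ε⁻¹ * t := by fun_prop
    exact (((measurable_one.indicator (measurableSet_cone F)).comp hm').indicator hs).aemeasurable
  have h2 : (fun t => ∑' ε : (𝓞 F)ˣ, s.indicator
      (fun t => (cone F).indicator (1 : RS F → ENNReal) (unitR F ε⁻¹ * t)) t) =ᵐ[mu0 F]
      fun t => (Units.torsionOrder F : ENNReal) * s.indicator 1 t := by
    rw [mu0]
    filter_upwards [ae_restrict_mem (measurableSet_TF F)] with t ht
    by_cases h : t ∈ s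
    · simp only [Set.indicator_of_mem h, Pi.one_apply, mul_one]
      exact tsum_indicator_cone F ht
    · simp [Set.indicator_of_notMem h]
  rw [lintegral_congr_ae h2, lintegral_const_mul' _ _ (by simp), lintegral_indicator_one hs]

/-! ### Gaussians on `D_F` -/

/-- The Euclidean vector attached to `z ∈ D_F`, scaled so that `f(z) = exp (-‖gvec z‖²)`. -/
def gvec (z : DS F) : WithLp 2 (PiLp 2 (fun _ : {v : InfinitePlace F // v.IsReal} => ℂ) ×
    PiLp 2 (fun _ : {v : InfinitePlace F // v.IsComplex} => Quaternion ℝ)) :=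
  WithLp.toLp 2 (WithLp.toLp 2 fun v => Real.sqrt Real.pi • z.1 v,
    WithLp.toLp 2 fun v => Real.sqrt (2 * Real.pi) • z.2 v)

/-- `f(z) = exp (-ρ(z)²)` for this Euclidean norm `ρ`. -/
def rho (z : DS F) : ℝ := ‖gvec F z‖

lemma rho_nonneg (z : DS F) : 0 ≤ rho F z := norm_nonneg _

lemma gvec_add (z w : DS F) : gvec F (z + w) = gvec F z + gvec F w := by
  unfold gvec
  rw [← WithLp.toLp_add]
  congr 1
  refine Prod.ext ?_ ?_
  · ext v; simp
  · ext v <;> simp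

lemma abs_rho_sub_le (x p : DS F) : |rho F (x + p) - rho F x| ≤ rho F p := by
  unfold rho
  rw [gvec_add]
  refine (abs_norm_sub_norm_le _ _).trans ?_
  rw [add_sub_cancel_left]

lemma rho_sq (z : DS F) : rho F z ^ 2 =
    (∑ v, Real.pi * ‖z.1 v‖ ^ 2) + ∑ v, 2 * Real.pi * ‖z.2 v‖ ^ 2 := by
  unfold rho gvec
  rw [WithLp.prod_norm_sq_eq_of_L2, PiLp.norm_sq_eq_of_L2, PiLp.norm_sq_eq_of_L2]
  congr 1 <;> refine Finset.sum_congr rfl fun v _ => ?_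
  · change ‖Real.sqrt Real.pi • z.1 v‖ ^ 2 = _
    rw [norm_smul, mul_pow, Real.norm_eq_abs, sq_abs, Real.sq_sqrt Real.pi_pos.le]
  · change ‖Real.sqrt (2 * Real.pi) • z.2 v‖ ^ 2 = _
    rw [norm_smul, mul_pow, Real.norm_eq_abs, sq_abs, Real.sq_sqrt (by positivity)]

lemma fD_eq (z : DS F) : fD F z = Real.exp (-rho F z ^ 2) := by
  rw [rho_sq, neg_add, Real.exp_add, ← Finset.sum_neg_distrib, ← Finset.sum_neg_distrib,
    Real.exp_sum, Real.exp_sum, fD]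
  simp only [neg_mul]

lemma norm_coeComplex (w : ℂ) : ‖(w : Quaternion ℝ)‖ = ‖w‖ := by
  have h1 : ‖(w : Quaternion ℝ)‖ ^ 2 = ‖w‖ ^ 2 := by
    rw [sq, ← Quaternion.normSq_eq_norm_mul_self, Quaternion.normSq_def', ← Complex.normSq_eq_norm_sq,
      Complex.normSq_apply]
    simp
    ring
  exact (sq_eq_sq₀ (norm_nonneg _) (norm_nonneg _)).mp h1

lemma norm_structureMap_mul (t : RS F) (z : DS F) :
    (∀ v, ‖(structureMap F t * z).1 v‖ = |t.1 v| * ‖z.1 v‖) ∧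
      ∀ v, ‖(structureMap F t * z).2 v‖ = ‖t.2 v‖ * ‖z.2 v‖ := by
  refine ⟨fun v => ?_, fun v => ?_⟩
  · change ‖((t.1 v : ℝ) : ℂ) * z.1 v‖ = _
    rw [norm_mul, Complex.norm_real, Real.norm_eq_abs]
  · change ‖((t.2 v : ℂ) : Quaternion ℝ) * z.2 v‖ = _
    rw [norm_mul, norm_coeComplex]

lemma normD_structureMap_mul (t : RS F) (z : DS F) :
    normD F (structureMap F t * z) = normR F t * normD F z := by
  obtain ⟨h1, h2⟩ := norm_structureMap_mul F t z
  simp only [normD, normR, h1, h2, mul_pow, Finset.prod_mul_distrib]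
  ring

instance : Measure.IsAddHaarMeasure volH :=
  Measure.MapLinearEquiv.isAddHaarMeasure volume
    Quaternion.linearIsometryEquivTuple.symm.toLinearEquiv

instance : SigmaFinite ((4 : ENNReal) • volH) := sigmaFinite_smul _ (by simp)

instance : Measure.IsAddHaarMeasure ((4 : ENNReal) • volH) :=
  Measure.IsAddHaarMeasure.smul _ (by simp) (by simp)

instance : SecondCountableTopology (Quaternion ℝ) :=
  Quaternion.linearIsometryEquivTuple.toHomeomorph.secondCountableTopology

instance : Measure.IsAddHaarMeasure (measD F) := by
  have h1 : Measure.IsAddHaarMeasure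
      (Measure.pi fun _ : {v : InfinitePlace F // v.IsReal} => (volume : Measure ℂ)) :=
    Measure.pi.isAddHaarMeasure _
  have h2 : Measure.IsAddHaarMeasure
      (Measure.pi fun _ : {v : InfinitePlace F // v.IsComplex} => (4 : ENNReal) • volH) :=
    Measure.pi.isAddHaarMeasure _
  exact Measure.prod.instIsAddHaarMeasure _ _

instance : SigmaFinite (measD F) := by
  unfold measD
  infer_instance

lemma integral_gauss_complex {b : ℝ} (hb : 0 < b) :
    ∫ x : ℂ, Real.exp (-b * ‖x‖ ^ 2) = Real.pi / b := by
  have := GaussianFourier.integral_rexp_neg_mul_sq_norm (V := ℂ) hb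
  rw [this, Complex.finrank_real_complex]
  norm_num

lemma integral_gauss_quaternion {b : ℝ} (hb : 0 < b) :
    ∫ x : Quaternion ℝ, Real.exp (-b * ‖x‖ ^ 2) ∂((4 : ENNReal) • volH) =
      4 * (Real.pi / b) ^ 2 := by
  have h := GaussianFourier.integral_rexp_neg_mul_sq_norm (V := EuclideanSpace ℝ (Fin 4)) hb
  rw [integral_smul_measure, volH]
  have h2 := integral_map_equiv (μ := (volume : Measure (EuclideanSpace ℝ (Fin 4))))
    (Quaternion.linearIsometryEquivTuple.symm.toHomeomorph.toMeasurableEquiv)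
    (fun x => Real.exp (-b * ‖x‖ ^ 2))
  change ∫ x, Real.exp (-b * ‖x‖ ^ 2) ∂(Measure.map Quaternion.linearIsometryEquivTuple.symm volume) =
    ∫ x, Real.exp (-b * ‖Quaternion.linearIsometryEquivTuple.symm x‖ ^ 2) at h2
  simp only [LinearIsometryEquiv.norm_map] at h2
  rw [h2, h, finrank_euclideanSpace_fin]
  have h4 : ((4 : ℕ) : ℝ) / 2 = ((2 : ℕ) : ℝ) := by norm_num
  rw [h4, Real.rpow_natCast, ENNReal.toReal_ofNat, smul_eq_mul]

/-- The constant `c ^ (-n)` appearing in the Gaussian integral with parameter `c`. -/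
def gconst (c : ℝ) : ℝ := (∏ _v : {v : InfinitePlace F // v.IsReal}, c⁻¹) *
  ∏ _v : {v : InfinitePlace F // v.IsComplex}, (c ^ 2)⁻¹

lemma gconst_pos {c : ℝ} (hc : 0 < c) : 0 < gconst F c := by
  unfold gconst
  exact mul_pos (Finset.prod_pos fun _ _ => inv_pos.mpr hc)
    (Finset.prod_pos fun _ _ => inv_pos.mpr (pow_pos hc 2))

lemma gconst_one : gconst F 1 = 1 := by simp [gconst]

lemma integral_gauss {t : RS F} (ht : t ∈ TF F) {c : ℝ} (hc : 0 < c) :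
    ∫ z, Real.exp (-(c * rho F (structureMap F t * z) ^ 2)) ∂measD F =
      gconst F c * (normR F t ^ 2)⁻¹ := by
  obtain ⟨h1, h2⟩ := (isUnit_iff_forall F t).mp ht
  have hfac : ∀ z : DS F, Real.exp (-(c * rho F (structureMap F t * z) ^ 2)) =
      (∏ v, Real.exp (-(c * Real.pi * |t.1 v| ^ 2) * ‖z.1 v‖ ^ 2)) *
        ∏ v, Real.exp (-(c * (2 * Real.pi) * ‖t.2 v‖ ^ 2) * ‖z.2 v‖ ^ 2) := by
    intro z
    obtain ⟨n1, n2⟩ := norm_structureMap_mul F t z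
    rw [rho_sq, mul_add, neg_add, Real.exp_add, Finset.mul_sum, Finset.mul_sum,
      ← Finset.sum_neg_distrib, ← Finset.sum_neg_distrib, Real.exp_sum, Real.exp_sum]
    congr 1 <;> refine Finset.prod_congr rfl fun v _ => ?_
    · rw [n1]; ring_nf
    · rw [n2]; ring_nf
  simp only [hfac]
  rw [measD, integral_prod_mul
    (fun z : {v : InfinitePlace F // v.IsReal} → ℂ =>
      ∏ v, Real.exp (-(c * Real.pi * |t.1 v| ^ 2) * ‖z v‖ ^ 2))
    (fun z : {v : InfinitePlace F // v.IsComplex} → Quaternion ℝ =>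
      ∏ v, Real.exp (-(c * (2 * Real.pi) * ‖t.2 v‖ ^ 2) * ‖z v‖ ^ 2)),
    integral_fintype_prod_eq_prod (fun v (x : ℂ) =>
      Real.exp (-(c * Real.pi * |t.1 v| ^ 2) * ‖x‖ ^ 2)),
    integral_fintype_prod_eq_prod (fun v (x : Quaternion ℝ) =>
      Real.exp (-(c * (2 * Real.pi) * ‖t.2 v‖ ^ 2) * ‖x‖ ^ 2))]
  have e1 : ∀ v, ∫ x : ℂ, Real.exp (-(c * Real.pi * |t.1 v| ^ 2) * ‖x‖ ^ 2) =
      c⁻¹ * (|t.1 v| ^ 2)⁻¹ := fun v => by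
    have := abs_pos.mpr (h1 v)
    rw [integral_gauss_complex (by positivity)]
    field_simp
  have e2 : ∀ v, ∫ x : Quaternion ℝ, Real.exp (-(c * (2 * Real.pi) * ‖t.2 v‖ ^ 2) * ‖x‖ ^ 2)
      ∂((4 : ENNReal) • volH) = (c ^ 2)⁻¹ * ((‖t.2 v‖ ^ 2) ^ 2)⁻¹ := fun v => by
    have := norm_pos_iff.mpr (h2 v)
    rw [integral_gauss_quaternion (by positivity)]
    field_simp
    norm_num
  simp only [e1, e2, Finset.prod_mul_distrib, gconst, normR, mul_pow, mul_inv, Finset.prod_inv_distrib,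
    Finset.prod_pow]
  ring

lemma integrable_gauss {t : RS F} (ht : t ∈ TF F) {c : ℝ} (hc : 0 < c) :
    Integrable (fun z => Real.exp (-(c * rho F (structureMap F t * z) ^ 2))) (measD F) := by
  refine Integrable.of_integral_ne_zero ?_
  rw [integral_gauss F ht hc]
  have := gconst_pos F hc
  have := normR_pos F ht
  positivity

/-! ### The lattice `𝔞z + 𝔟` -/

lemma structureMap_smul (c : ℝ) (u : RS F) : structureMap F (c • u) = c • structureMap F u := by
  refine Prod.ext ?_ ?_
  · ext v
    change (((c • u.1 v : ℝ)) : ℂ) = c • ((u.1 v : ℝ) : ℂ)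
    simp
  · ext1 v
    change ((c • u.2 v : ℂ) : Quaternion ℝ) = c • ((u.2 v : ℂ) : Quaternion ℝ)
    ext <;> simp

lemma structureMap_snd (q : RS F) (v) : ((structureMap F q).2 v).re = (q.2 v).re ∧
    ((structureMap F q).2 v).imI = (q.2 v).im ∧ ((structureMap F q).2 v).imJ = 0 ∧
      ((structureMap F q).2 v).imK = 0 := ⟨rfl, rfl, rfl, rfl⟩

lemma jF_snd (v) : ((jF F).2 v).re = 0 ∧ ((jF F).2 v).imI = 0 ∧ ((jF F).2 v).imJ = 1 ∧
    ((jF F).2 v).imK = 0 := ⟨rfl, rfl, rfl, rfl⟩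

lemma proj_add_mul_jF (p q : RS F) :
    projX F (structureMap F p + structureMap F q * jF F) = p ∧
      projY F (structureMap F p + structureMap F q * jF F) = q := by
  have h1 : ∀ v, (structureMap F p + structureMap F q * jF F).1 v =
      (p.1 v : ℂ) + (q.1 v : ℂ) * Complex.I := fun v => rfl
  refine ⟨?_, ?_⟩
  · refine Prod.ext (funext fun v => ?_) (funext fun v => ?_)
    · simp only [projX, h1]; simp
    · exact Complex.ext (by simp [projX, structureMap_snd, jF_snd])
        (by simp [projX, structureMap_snd, jF_snd])
  · refine Prod.ext (funext fun v => ?_) (funext fun v => ?_)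
    · simp only [projY, h1]; simp
    · exact Complex.ext (by simp [projY, structureMap_snd, jF_snd])
        (by simp [projY, structureMap_snd, jF_snd])

lemma normD_ne_zero_iff (w : DS F) : normD F w ≠ 0 ↔ (∀ v, w.1 v ≠ 0) ∧ ∀ v, w.2 v ≠ 0 := by
  simp [normD, Finset.prod_ne_zero_iff]

lemma normD_nonneg (w : DS F) : 0 ≤ normD F w := by
  unfold normD
  positivity

/-- An element of `D_F` whose `j_F`-coordinate is a unit has nonzero norm. -/
lemma normD_ne_zero_of_isUnit (p q : RS F) (hq : IsUnit q) :
    normD F (structureMap F p + structureMap F q * jF F) ≠ 0 := by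
  obtain ⟨h1, h2⟩ := (isUnit_iff_forall F q).mp hq
  have hp := (proj_add_mul_jF F p q).2
  set w := structureMap F p + structureMap F q * jF F
  refine (normD_ne_zero_iff F w).mpr ⟨fun v h => h1 v ?_, fun v h => h2 v ?_⟩
  · rw [← hp]; simp [projY, h]
  · rw [← hp]
    simp only [projY, h]
    rfl

lemma mixedEmbedding_mem_TF {α : F} (hα : α ≠ 0) : mixedEmbedding F α ∈ TF F :=
  (IsUnit.mk0 α hα).map (mixedEmbedding F)

lemma normD_FtoD_mul (α : F) (w : DS F) :
    normD F (FtoD F α * w) = normR F (mixedEmbedding F α) * normD F w :=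
  normD_structureMap_mul F _ w

/-- The units act freely on points of nonzero norm. -/
lemma unit_eq_one_of_mul_eq {ε δ : (𝓞 F)ˣ} {w : DS F} (hw : normD F w ≠ 0)
    (h : FtoD F ((ε : 𝓞 F) : F) * w = FtoD F ((δ : 𝓞 F) : F) * w) : ε = δ := by
  have h2 : FtoD F (((ε : 𝓞 F) : F) - ((δ : 𝓞 F) : F)) * w = 0 := by
    rw [map_sub, sub_mul, h, sub_self]
  have h3 := normD_FtoD_mul F (((ε : 𝓞 F) : F) - ((δ : 𝓞 F) : F)) w
  rw [h2] at h3
  have h0 : normD F (0 : DS F) = 0 := by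
    by_contra h0
    have h4 := (normD_ne_zero_iff F 0).mp h0
    obtain ⟨v⟩ := (inferInstance : Nonempty (InfinitePlace F))
    rcases v.isReal_or_isComplex with hv | hv
    · exact h4.1 ⟨v, hv⟩ rfl
    · exact h4.2 ⟨v, hv⟩ rfl
  rw [h0] at h3
  have h4 := (mul_eq_zero.mp h3.symm).resolve_right hw
  by_contra hne
  refine (normR_pos F (mixedEmbedding_mem_TF F (α := ((ε : 𝓞 F) : F) - ((δ : 𝓞 F) : F)) ?_)).ne' h4
  intro h5
  exact hne (Units.ext (RingOfIntegers.ext (sub_eq_zero.mp h5)))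

section Lattice

variable {F} {a b : FractionalIdeal (𝓞 F)⁰ F} {x y : RS F} {z : DS F}

lemma FtoD_add_eq (hz : z = structureMap F x + structureMap F y * jF F) (u v : RS F) :
    structureMap F u * z + structureMap F v =
      structureMap F (u * x + v) + structureMap F (u * y) * jF F := by
  rw [hz, mul_add, ← mul_assoc, ← map_mul, ← map_mul, map_add]
  abel

lemma latAB_nondeg (hy : IsUnit y) (hz : z = structureMap F x + structureMap F y * jF F)
    {l : DS F} (hl : l ∈ latAB F a b z) (h0 : l ≠ 0) : normD F l ≠ 0 := by
  obtain ⟨α, -, β, -, rfl⟩ := hl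
  by_cases hα : α = 0
  · subst hα
    have hβ : β ≠ 0 := by
      rintro rfl
      simp at h0
    rw [map_zero, zero_mul, zero_add, ← mul_one (FtoD F β), normD_FtoD_mul]
    refine mul_ne_zero (normR_pos F (mixedEmbedding_mem_TF F hβ)).ne' ?_
    exact (normD_ne_zero_iff F 1).mpr ⟨fun v => one_ne_zero, fun v => one_ne_zero⟩
  · have := FtoD_add_eq hz (mixedEmbedding F α) (mixedEmbedding F β)
    change FtoD F α * z + FtoD F β = _ at this
    rw [this]
    exact normD_ne_zero_of_isUnit F _ _ ((mixedEmbedding_mem_TF F hα).mul hy)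

/-- The coordinates of `D_F` with respect to the `F_ℝ`-basis `z, 1`. -/
def coordMap (z : DS F) : (RS F × RS F) →ₗ[ℝ] DS F where
  toFun p := structureMap F p.1 * z + structureMap F p.2
  map_add' p q := by
    simp only [Prod.fst_add, Prod.snd_add, map_add, add_mul]
    abel
  map_smul' c p := by
    simp only [Prod.smul_fst, Prod.smul_snd, structureMap_smul, smul_add, RingHom.id_apply]
    congr 1
    refine Prod.ext ?_ ?_
    · ext1 v; simp
    · ext1 v; simp

lemma coordMap_injective (hy : IsUnit y) (hz : z = structureMap F x + structureMap F y * jF F) :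
    Function.Injective (coordMap z) := by
  rw [← LinearMap.ker_eq_bot, LinearMap.ker_eq_bot']
  rintro ⟨u, v⟩ h
  change structureMap F u * z + structureMap F v = 0 at h
  rw [FtoD_add_eq hz] at h
  obtain ⟨h1, h2⟩ := proj_add_mul_jF F (u * x + v) (u * y)
  obtain ⟨h3, h4⟩ := proj_add_mul_jF F 0 0
  simp only [map_zero, zero_mul, add_zero] at h3 h4
  rw [h, h3] at h1
  rw [h, h4] at h2
  have hu : u = 0 := (IsUnit.mul_left_eq_zero hy).mp h2.symm
  subst hu
  rw [zero_mul, zero_add] at h1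
  rw [← h1]
  rfl

lemma finrank_RS_prod : Module.finrank ℝ (RS F × RS F) = Module.finrank ℝ (DS F) := by
  have : Module.finrank ℝ (Quaternion ℝ) = 4 := Quaternion.finrank_eq_four
  simp only [Module.finrank_prod, Module.finrank_pi_fintype, this, Complex.finrank_real_complex,
    Module.finrank_self, Finset.sum_const]
  simp only [smul_eq_mul]
  ring

open Classical in
lemma exists_basis (ha : a ≠ 0) (hb : b ≠ 0) (hy : IsUnit y)
    (hz : z = structureMap F x + structureMap F y * jF F) :
    ∃ (ι : Type) (_ : Fintype ι) (B : Module.Basis ι ℝ (DS F)),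
      (Submodule.span ℤ (Set.range B)).toAddSubgroup = latAB F a b z := by
  let A := mixedEmbedding.fractionalIdealLatticeBasis F (Units.mk0 a ha)
  let C := mixedEmbedding.fractionalIdealLatticeBasis F (Units.mk0 b hb)
  let e := (coordMap z).linearEquivOfInjective (coordMap_injective hy hz) finrank_RS_prod
  have hA u := mixedEmbedding.mem_span_fractionalIdealLatticeBasis F (Units.mk0 a ha) (x := u)
  have hC u := mixedEmbedding.mem_span_fractionalIdealLatticeBasis F (Units.mk0 b hb) (x := u)
  refine ⟨_, inferInstance, (A.prod C).map e, ?_⟩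
  let f : (RS F × RS F) →ₗ[ℤ] DS F := (coordMap z).toAddMonoidHom.toIntLinearMap
  have hr : Set.range ((A.prod C).map e) =
      f '' ((LinearMap.inl ℤ _ _ '' Set.range A) ∪ (LinearMap.inr ℤ _ _ '' Set.range C)) := by
    ext w
    simp only [Set.mem_range, Set.mem_image, Set.mem_union, Sum.exists, Module.Basis.map_apply,
      Module.Basis.prod_apply]
    constructor
    · rintro (⟨i, rfl⟩ | ⟨i, rfl⟩)
      · exact ⟨_, Or.inl ⟨_, ⟨i, rfl⟩, rfl⟩, rfl⟩
      · exact ⟨_, Or.inr ⟨_, ⟨i, rfl⟩, rfl⟩, rfl⟩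
    · rintro ⟨_, ⟨_, ⟨i, rfl⟩, rfl⟩ | ⟨_, ⟨i, rfl⟩, rfl⟩, rfl⟩
      · exact Or.inl ⟨i, rfl⟩
      · exact Or.inr ⟨i, rfl⟩
  ext w
  rw [Submodule.mem_toAddSubgroup, hr, ← Submodule.map_span, Submodule.span_union,
    ← Submodule.map_span, ← Submodule.map_span, Submodule.map_sup, Submodule.mem_sup]
  constructor
  · rintro ⟨_, ⟨_, ⟨u, hu, rfl⟩, rfl⟩, _, ⟨_, ⟨v, hv, rfl⟩, rfl⟩, rfl⟩
    obtain ⟨α, hα, rfl⟩ := (hA _).mp hu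
    obtain ⟨β, hβ, rfl⟩ := (hC _).mp hv
    refine ⟨α, hα, β, hβ, ?_⟩
    change (structureMap F _ * z + structureMap F 0) + (structureMap F 0 * z + structureMap F _) = _
    rw [map_zero, zero_mul, add_zero, zero_add]
    rfl
  · rintro ⟨α, hα, β, hβ, rfl⟩
    refine ⟨_, ⟨_, ⟨mixedEmbedding F α, (hA _).mpr ⟨α, hα, rfl⟩, rfl⟩, rfl⟩,
      _, ⟨_, ⟨mixedEmbedding F β, (hC _).mpr ⟨β, hβ, rfl⟩, rfl⟩, rfl⟩, ?_⟩
    change (structureMap F _ * z + structureMap F 0) + (structureMap F 0 * z + structureMap F _) = _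
    rw [map_zero, zero_mul, add_zero, zero_add]
    rfl

/-- The lattice is countable and has a bounded fundamental domain, whose measure is the positive
number `V(Λ)`. -/
lemma latAB_fundDom (ha : a ≠ 0) (hb : b ≠ 0) (hy : IsUnit y)
    (hz : z = structureMap F x + structureMap F y * jF F)
    {V : ℝ} (hV : HasVol F (latAB F a b z) V) :
    Countable (latAB F a b z) ∧ 0 < V ∧ ∃ P : Set (DS F),
      IsAddFundamentalDomain (latAB F a b z) P (measD F) ∧ Bornology.IsBounded P ∧
        measD F P = ENNReal.ofReal V := by
  obtain ⟨ι, _, B, hB⟩ := exists_basis ha hb hy hz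
  have hcount : Countable (latAB F a b z) := by
    rw [← hB]
    have : Finite ι := inferInstance
    exact inferInstanceAs (Countable (Submodule.span ℤ (Set.range B)))
  have hfd : IsAddFundamentalDomain (latAB F a b z) (ZSpan.fundamentalDomain B) (measD F) := by
    rw [← hB]
    exact ZSpan.isAddFundamentalDomain' B (measD F)
  obtain ⟨s, hs, hsV⟩ := hV
  have hm : measD F (ZSpan.fundamentalDomain B) = ENNReal.ofReal V :=
    (hfd.measure_eq hs).trans hsV
  refine ⟨hcount, ?_, _, hfd, ZSpan.fundamentalDomain_isBounded B, hm⟩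
  by_contra! hle
  rw [ENNReal.ofReal_of_nonpos hle] at hm
  exact hfd.measure_ne_zero (NeZero.ne _) hm

end Lattice

/-! ### Theta series -/

/-- The set of nonzero points of a lattice. -/
abbrev NZ (Λ : AddSubgroup (DS F)) : Set (DS F) := (Λ : Set (DS F)) \ {0}

/-- The theta series `Θ(t) = Σ_{λ ≠ 0} f(tλ)`. -/
def theta (Λ : AddSubgroup (DS F)) (t : RS F) : ℝ :=
  ∑' l : NZ F Λ, fD F (structureMap F t * (l : DS F))

lemma rho_bounds {b B : ℝ} (hb : 0 ≤ b) (hB : 0 ≤ B) {t : RS F}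
    (h1 : ∀ v, b ≤ |t.1 v| ∧ |t.1 v| ≤ B) (h2 : ∀ v, b ≤ ‖t.2 v‖ ∧ ‖t.2 v‖ ≤ B) (z : DS F) :
    b * rho F z ≤ rho F (structureMap F t * z) ∧ rho F (structureMap F t * z) ≤ B * rho F z := by
  obtain ⟨n1, n2⟩ := norm_structureMap_mul F t z
  have hpi := Real.pi_pos
  constructor
  · refine le_of_sq_le_sq ?_ (rho_nonneg F _)
    rw [mul_pow, rho_sq, rho_sq, mul_add, Finset.mul_sum, Finset.mul_sum]
    refine add_le_add (Finset.sum_le_sum fun v _ => ?_) (Finset.sum_le_sum fun v _ => ?_)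
    · rw [n1, mul_pow]
      have := pow_le_pow_left₀ hb (h1 v).1 2
      have h3 : 0 ≤ Real.pi * ‖z.1 v‖ ^ 2 := by positivity
      nlinarith
    · rw [n2, mul_pow]
      have := pow_le_pow_left₀ hb (h2 v).1 2
      have h3 : 0 ≤ 2 * Real.pi * ‖z.2 v‖ ^ 2 := by positivity
      nlinarith
  · refine le_of_sq_le_sq ?_ (mul_nonneg hB (rho_nonneg F _))
    rw [mul_pow, rho_sq, rho_sq, mul_add, Finset.mul_sum, Finset.mul_sum]
    refine add_le_add (Finset.sum_le_sum fun v _ => ?_) (Finset.sum_le_sum fun v _ => ?_)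
    · rw [n1, mul_pow]
      have := pow_le_pow_left₀ (abs_nonneg _) (h1 v).2 2
      have h3 : 0 ≤ Real.pi * ‖z.1 v‖ ^ 2 := by positivity
      nlinarith
    · rw [n2, mul_pow]
      have := pow_le_pow_left₀ (norm_nonneg _) (h2 v).2 2
      have h3 : 0 ≤ 2 * Real.pi * ‖z.2 v‖ ^ 2 := by positivity
      nlinarith

lemma rho_pos {z : DS F} (hz : z ≠ 0) : 0 < rho F z := by
  refine lt_of_le_of_ne (rho_nonneg F z) fun h => hz ?_
  have h2 := rho_sq F z
  have hpi := Real.pi_pos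
  rw [← h, zero_pow two_ne_zero] at h2
  have hA : 0 ≤ ∑ v, Real.pi * ‖z.1 v‖ ^ 2 := Finset.sum_nonneg fun _ _ => by positivity
  have hB : 0 ≤ ∑ v, 2 * Real.pi * ‖z.2 v‖ ^ 2 := Finset.sum_nonneg fun _ _ => by positivity
  have hA0 := (Finset.sum_eq_zero_iff_of_nonneg fun _ _ => by positivity).mp
    (show ∑ v, Real.pi * ‖z.1 v‖ ^ 2 = 0 by linarith)
  have hB0 := (Finset.sum_eq_zero_iff_of_nonneg fun _ _ => by positivity).mp
    (show ∑ v, 2 * Real.pi * ‖z.2 v‖ ^ 2 = 0 by linarith)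
  refine Prod.ext (funext fun v => ?_) (funext fun v => ?_)
  · simpa [hpi.ne'] using hA0 v (Finset.mem_univ v)
  · simpa [hpi.ne'] using hB0 v (Finset.mem_univ v)

lemma exists_rho_le {P : Set (DS F)} (hP : Bornology.IsBounded P) :
    ∃ M, 0 ≤ M ∧ ∀ p ∈ P, rho F p ≤ M := by
  obtain ⟨C, hC⟩ := isBounded_iff_forall_norm_le.mp hP
  have hpi := Real.pi_pos
  refine ⟨Real.sqrt ((∑ _v : {v : InfinitePlace F // v.IsReal}, Real.pi * C ^ 2) +
    ∑ _v : {v : InfinitePlace F // v.IsComplex}, 2 * Real.pi * C ^ 2), Real.sqrt_nonneg _,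
    fun p hp => Real.le_sqrt_of_sq_le ?_⟩
  rw [rho_sq]
  have hp1 := hC p hp
  refine add_le_add (Finset.sum_le_sum fun v _ => ?_) (Finset.sum_le_sum fun v _ => ?_)
  · have := ((norm_le_pi_norm p.1 v).trans (norm_fst_le p)).trans hp1
    gcongr
  · have := ((norm_le_pi_norm p.2 v).trans (norm_snd_le p)).trans hp1
    gcongr

section Theta

variable {F} {Λ : AddSubgroup (DS F)} [Countable Λ] {V : ℝ} {P : Set (DS F)}

lemma sum_gauss (hV : 0 < V) (hP : IsAddFundamentalDomain Λ P (measD F))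
    (hPV : measD F P = ENNReal.ofReal V) {t : RS F} (ht : t ∈ TF F) {d : ℝ}
    (hd : ∀ p ∈ P, rho F (structureMap F t * p) ≤ d) :
    (Summable fun l : Λ => fD F (structureMap F t * (l : DS F))) ∧
      |V * ∑' l : Λ, fD F (structureMap F t * (l : DS F)) - (normR F t ^ 2)⁻¹| ≤
        Real.exp (d ^ 2) * (d * (2 + d)) * (gconst F (1 / 4) * (normR F t ^ 2)⁻¹) := by
  have h1 : (fun z => Real.exp (-(1 * rho F (structureMap F t * z) ^ 2))) =
      fun z => Real.exp (-rho F (structureMap F t * z) ^ 2) := by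
    funext z; rw [one_mul]
  have h4 : (fun z => Real.exp (-(1 / 4 * rho F (structureMap F t * z) ^ 2))) =
      fun z => Real.exp (-(rho F (structureMap F t * z) ^ 2) / 4) := by
    funext z; congr 1; ring
  have i1 := integrable_gauss F ht one_pos
  have i4 := integrable_gauss F ht (c := 1 / 4) (by norm_num)
  have e1 := integral_gauss F ht one_pos
  have e4 := integral_gauss F ht (c := 1 / 4) (by norm_num)
  rw [h1] at i1
  rw [h4] at i4
  rw [h1, gconst_one, one_mul] at e1
  rw [h4] at e4
  have key := riemann_sum (ρ := fun z => rho F (structureMap F t * z)) (d := d) hP hV hPV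
    (fun _ => rho_nonneg F _)
    (fun z p hp => by
      rw [mul_add]
      exact (abs_rho_sub_le F _ _).trans (hd p hp)) i1 i4
  rw [e1, e4] at key
  simp only [fD_eq]
  exact key

lemma summable_gauss (hV : 0 < V) (hP : IsAddFundamentalDomain Λ P (measD F))
    (hPV : measD F P = ENNReal.ofReal V) (hPb : Bornology.IsBounded P) {t : RS F} (ht : t ∈ TF F) :
    Summable fun l : Λ => fD F (structureMap F t * (l : DS F)) := by
  obtain ⟨M, hM0, hM⟩ := exists_rho_le F hPb
  have hfin : ∃ B : ℝ, 0 ≤ B ∧ (∀ v, |t.1 v| ≤ B) ∧ ∀ v, ‖t.2 v‖ ≤ B := by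
    refine ⟨‖t‖, norm_nonneg _, fun v => ?_, fun v => ?_⟩
    · exact (norm_le_pi_norm t.1 v).trans (norm_fst_le t)
    · exact (norm_le_pi_norm t.2 v).trans (norm_snd_le t)
  obtain ⟨B, hB0, hB1, hB2⟩ := hfin
  refine (sum_gauss hV hP hPV ht (d := B * M) fun p hp => ?_).1
  refine (rho_bounds F le_rfl hB0 (fun v => ⟨abs_nonneg _, hB1 v⟩)
    (fun v => ⟨norm_nonneg _, hB2 v⟩) p).2.trans ?_
  exact mul_le_mul_of_nonneg_left (hM p hp) hB0

lemma hasSum_theta {t : RS F}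
    (h : Summable fun l : Λ => fD F (structureMap F t * (l : DS F))) :
    HasSum (fun l : NZ F Λ => fD F (structureMap F t * (l : DS F))) (theta F Λ t) ∧
      ∑' l : Λ, fD F (structureMap F t * (l : DS F)) = theta F Λ t + 1 := by
  have hs : Summable fun l : NZ F Λ => fD F (structureMap F t * (l : DS F)) :=
    h.comp_injective (i := fun l : NZ F Λ => (⟨l, l.2.1⟩ : Λ))
      fun l m hlm => Subtype.ext (congrArg (Subtype.val : Λ → DS F) hlm)
  refine ⟨hs.hasSum, ?_⟩
  have h0 : HasSum (fun l : ({0} : Set (DS F)) => fD F (structureMap F t * (l : DS F))) 1 := by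
    have := hasSum_unique (fun l : ({0} : Set (DS F)) => fD F (structureMap F t * (l : DS F)))
    convert this using 1
    change 1 = fD F (structureMap F t * 0)
    simp [fD]
  have h2 := HasSum.add_disjoint (f := fun l : DS F => fD F (structureMap F t * l))
    (s := NZ F Λ) (t := {0}) Set.disjoint_sdiff_left hs.hasSum h0
  have hu : NZ F Λ ∪ {0} = (Λ : Set (DS F)) :=
    Set.sdiff_union_of_subset (Set.singleton_subset_iff.mpr Λ.zero_mem)
  rw [hu] at h2
  exact h2.tsum_eq

end Theta

/-! ### Growth of the theta series on the cone -/

/-- The diagonal copy of a real number in `F_ℝ`. -/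
def diagR (c : ℝ) : RS F := (fun _ => c, fun _ => (c : ℂ))

lemma rho_diagR {c : ℝ} (hc : 0 ≤ c) (z : DS F) :
    rho F (structureMap F (diagR F c) * z) = c * rho F z := by
  have h := rho_bounds F (t := diagR F c) hc hc
    (fun v => by simp [diagR, abs_of_nonneg hc]) (fun v => by simp [diagR, abs_of_nonneg hc]) z
  exact le_antisymm h.2 h.1

lemma diagR_mem {c : ℝ} (hc : 0 < c) : diagR F c ∈ TF F :=
  (isUnit_iff_forall F _).mpr ⟨fun v => by simpa [diagR] using hc.ne',
    fun v => by simpa [diagR] using hc.ne'⟩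

section Growth

variable {F} {Λ : AddSubgroup (DS F)} [Countable Λ] {V : ℝ} {P : Set (DS F)}

lemma exists_min_rho (hV : 0 < V) (hP : IsAddFundamentalDomain Λ P (measD F))
    (hPV : measD F P = ENNReal.ofReal V) (hPb : Bornology.IsBounded P) :
    ∃ q : ℝ, 0 < q ∧ ∀ l : NZ F Λ, q ≤ rho F (l : DS F) ^ 2 := by
  have hs := (hasSum_theta (summable_gauss hV hP hPV hPb (diagR_mem F one_pos))).1.summable
  have hfin : {l : NZ F Λ | ¬ fD F (structureMap F (diagR F 1) * (l : DS F)) <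
      Real.exp (-1)}.Finite :=
    Filter.eventually_cofinite.mp
      ((tendsto_order.mp hs.tendsto_cofinite_zero).2 _ (Real.exp_pos _))
  have hlt : ∀ l : NZ F Λ,
      l ∉ {l : NZ F Λ | ¬ fD F (structureMap F (diagR F 1) * (l : DS F)) < Real.exp (-1)} →
      1 ≤ rho F (l : DS F) ^ 2 := fun l hl => by
    have : fD F (structureMap F (diagR F 1) * (l : DS F)) < Real.exp (-1) := by
      simpa using hl
    rw [fD_eq, rho_diagR F zero_le_one, one_mul, Real.exp_lt_exp] at this
    linarith
  rcases Set.eq_empty_or_nonempty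
    {l : NZ F Λ | ¬ fD F (structureMap F (diagR F 1) * (l : DS F)) < Real.exp (-1)} with he | hne
  · exact ⟨1, one_pos, fun l => hlt l (by rw [he]; exact Set.notMem_empty _)⟩
  · obtain ⟨m, hm, hmin⟩ := Set.exists_min_image _ (fun l : NZ F Λ => rho F (l : DS F) ^ 2) hfin hne
    refine ⟨min 1 (rho F (m : DS F) ^ 2), lt_min one_pos (pow_pos (rho_pos F m.2.2) 2),
      fun l => ?_⟩
    by_cases hl : l ∈ {l : NZ F Λ |
        ¬ fD F (structureMap F (diagR F 1) * (l : DS F)) < Real.exp (-1)}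
    · exact (min_le_right _ _).trans (hmin l hl)
    · exact (min_le_left _ _).trans (hlt l hl)

/-- Riemann sum estimate for `Θ` near `0` in the cone: the term `λ = 0` is absorbed in the
error, which exceeds `1`. -/
lemma theta_small (hV : 0 < V) (hP : IsAddFundamentalDomain Λ P (measD F))
    (hPV : measD F P = ENNReal.ofReal V) (hPb : Bornology.IsBounded P) :
    ∃ K : ℝ, 0 ≤ K ∧ ∀ t ∈ cone F, normR F t < 1 →
      |theta F Λ t - V⁻¹ * (normR F t ^ 2)⁻¹| ≤ K * (scale F t * (normR F t ^ 2)⁻¹) := by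
  obtain ⟨b, B, hb, hB, hcone⟩ := exists_cone_bounds F
  obtain ⟨M, hM0, hM⟩ := exists_rho_le F hPb
  set D := B * M with hD
  have hD0 : 0 ≤ D := mul_nonneg hB.le hM0
  have hG := gconst_pos F (c := 1 / 4) (by norm_num)
  set K1 := Real.exp (D ^ 2) * (D * (2 + D)) * gconst F (1 / 4) with hK1
  have hK10 : 0 ≤ K1 := by positivity
  refine ⟨1 + V⁻¹ * K1, by positivity, fun t ht hN => ?_⟩
  have htT := cone_subset F ht
  have hNp := normR_pos F htT
  have hτ := scale_pos F htT
  have hτN := scale_pow F (t := t)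
  have hτ1 : scale F t ≤ 1 := Real.rpow_le_one hNp.le hN.le (by positivity)
  obtain ⟨c1, c2⟩ := hcone t ht
  have hd : ∀ p ∈ P, rho F (structureMap F t * p) ≤ D * scale F t := fun p hp => by
    refine (rho_bounds F (mul_pos hb hτ).le (mul_pos hB hτ).le c1 c2 p).2.trans ?_
    rw [hD, mul_right_comm B M]
    exact mul_le_mul_of_nonneg_left (hM p hp) (mul_pos hB hτ).le
  obtain ⟨hsum, hest⟩ := sum_gauss hV hP hPV htT hd
  rw [(hasSum_theta hsum).2] at hest
  set τ := scale F t
  set W := (normR F t ^ 2)⁻¹ with hW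
  have hW0 : 0 < W := by positivity
  have hDτ : D * τ ≤ D := mul_le_of_le_one_right hD0 hτ1
  have hDτ0 : 0 ≤ D * τ := mul_nonneg hD0 hτ.le
  have h1 : |V * (theta F Λ t + 1) - W| ≤ K1 * (τ * W) := by
    refine hest.trans ?_
    have e1 : Real.exp ((D * τ) ^ 2) ≤ Real.exp (D ^ 2) :=
      Real.exp_le_exp.mpr (pow_le_pow_left₀ hDτ0 hDτ 2)
    have e2 : D * τ * (2 + D * τ) ≤ D * (2 + D) * τ := by
      have : D * τ * (2 + D * τ) ≤ D * τ * (2 + D) :=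
        mul_le_mul_of_nonneg_left (by linarith) hDτ0
      linarith
    calc Real.exp ((D * τ) ^ 2) * (D * τ * (2 + D * τ)) * (gconst F (1 / 4) * W)
        ≤ Real.exp (D ^ 2) * (D * (2 + D) * τ) * (gconst F (1 / 4) * W) := by gcongr
      _ = K1 * (τ * W) := by rw [hK1]; ring
  have h2 : 1 ≤ τ * W := by
    rw [hW, ← div_eq_mul_inv, one_le_div (by positivity), ← hτN, ← pow_mul]
    exact pow_le_of_le_one hτ.le hτ1 (by have := deg_pos F; omega)
  have h3 : |theta F Λ t - V⁻¹ * W| = |V⁻¹ * (V * (theta F Λ t + 1) - W) - 1| := by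
    congr 1; field_simp; ring
  rw [h3]
  refine (abs_sub _ _).trans ?_
  rw [abs_mul, abs_of_pos (inv_pos.mpr hV), abs_one, add_mul, mul_assoc]
  have := mul_le_mul_of_nonneg_left h1 (inv_pos.mpr hV).le
  linarith

/-- Decay of `Θ` at infinity in the cone. Any power of the norm could be obtained; the exponent `12`
gives convergence of the Mellin transform at `2s` for `Re s < 6`. -/
lemma theta_large (hV : 0 < V) (hP : IsAddFundamentalDomain Λ P (measD F))
    (hPV : measD F P = ENNReal.ofReal V) (hPb : Bornology.IsBounded P) :
    ∃ K : ℝ, 0 ≤ K ∧ ∀ t ∈ cone F, 1 ≤ normR F t →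
      |theta F Λ t| ≤ K * (normR F t ^ 12)⁻¹ := by
  obtain ⟨b, B, hb, hB, hcone⟩ := exists_cone_bounds F
  obtain ⟨q, hq, hmin⟩ := exists_min_rho hV hP hPV hPb
  set a := b ^ 2 / 2 with ha
  have ha0 : 0 < a := by positivity
  have hs0 := (hasSum_theta (summable_gauss hV hP hPV hPb
    (diagR_mem F (Real.sqrt_pos.mpr ha0)))).1
  set S := theta F Λ (diagR F (Real.sqrt a))
  have hS0 : 0 ≤ S := hs0.nonneg fun l => by rw [fD_eq]; positivity
  set n := deg F with hn
  refine ⟨((6 * n).factorial / (a * q) ^ (6 * n)) * S, by positivity, fun t ht hN => ?_⟩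
  have htT := cone_subset F ht
  have hNp := normR_pos F htT
  have hτN := scale_pow F (t := t)
  have hτ1 : 1 ≤ scale F t := Real.one_le_rpow hN (by positivity)
  have hτ := scale_pos F htT
  obtain ⟨c1, c2⟩ := hcone t ht
  set τ := scale F t
  have hs := (hasSum_theta (summable_gauss hV hP hPV hPb htT)).1
  have hnn : 0 ≤ theta F Λ t := hs.nonneg fun l => by rw [fD_eq]; positivity
  rw [abs_of_nonneg hnn]
  have hle : theta F Λ t ≤ Real.exp (-(a * q * τ ^ 2)) * S := by
    refine hasSum_le (fun l => ?_) hs (hs0.mul_left _)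
    rw [fD_eq, fD_eq, rho_diagR F (Real.sqrt_nonneg _), ← Real.exp_add, Real.exp_le_exp,
      mul_pow, Real.sq_sqrt ha0.le]
    have h1 := (rho_bounds F (mul_pos hb hτ).le (mul_pos hB hτ).le c1 c2 (l : DS F)).1
    have h2 := pow_le_pow_left₀ (mul_nonneg (mul_pos hb hτ).le (rho_nonneg F _)) h1 2
    have h3 : (b * τ * rho F (l : DS F)) ^ 2 =
        a * τ ^ 2 * rho F (l : DS F) ^ 2 + a * τ ^ 2 * rho F (l : DS F) ^ 2 := by
      rw [ha]; ring
    have h4 : a * τ ^ 2 * q ≤ a * τ ^ 2 * rho F (l : DS F) ^ 2 :=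
      mul_le_mul_of_nonneg_left (hmin l) (by positivity)
    have h5 : a * rho F (l : DS F) ^ 2 ≤ a * τ ^ 2 * rho F (l : DS F) ^ 2 := by
      refine mul_le_mul_of_nonneg_right ?_ (sq_nonneg _)
      exact le_mul_of_one_le_right ha0.le (one_le_pow₀ hτ1)
    linarith
  refine hle.trans ?_
  rw [mul_right_comm _ S]
  refine mul_le_mul_of_nonneg_right ?_ hS0
  -- `exp x ≥ x ^ (6n) / (6n)!` at `x = a q τ²`, where `τ ^ n = |N(t)|`
  have hx : 0 ≤ a * q * τ ^ 2 := by positivity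
  have h6 := Real.pow_div_factorial_le_exp _ hx (6 * n)
  have h7 : (a * q * τ ^ 2) ^ (6 * n) = (a * q) ^ (6 * n) * normR F t ^ 12 := by
    rw [← hτN, mul_pow, ← pow_mul, ← pow_mul]; congr 2; ring
  rw [h7] at h6
  rw [Real.exp_neg]
  refine (inv_anti₀ (by positivity) h6).trans (le_of_eq ?_)
  field_simp

end Growth

/-! ### Mellin transforms -/

/-- A two-sided Laplace transform is analytic in the interior of its strip of absolute
convergence. -/
lemma analyticOnNhd_laplace {α : Type*} [MeasurableSpace α] {μ : Measure α} {X H : α → ℝ}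
    (hX : Measurable X) (hH : Measurable H) {a b : ℝ}
    (h : ∀ σ ∈ Set.Ioo a b, Integrable (fun ω => H ω * Real.exp (σ * X ω)) μ) :
    (∀ s : ℂ, s.re ∈ Set.Ioo a b → Integrable (fun ω => (H ω : ℂ) * Complex.exp (s * X ω)) μ) ∧
    AnalyticOnNhd ℂ (fun s : ℂ => ∫ ω, (H ω : ℂ) * Complex.exp (s * X ω) ∂μ)
      {s | s.re ∈ Set.Ioo a b} := by
  have hi : ∀ s : ℂ, s.re ∈ Set.Ioo a b →
      Integrable (fun ω => (H ω : ℂ) * Complex.exp (s * X ω)) μ := fun s hs => by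
    refine (h _ hs).norm.mono' (by fun_prop) (Filter.Eventually.of_forall fun ω => ?_)
    rw [norm_mul, norm_mul, Complex.norm_exp, Complex.norm_real, Real.norm_eq_abs (Real.exp _),
      abs_of_pos (Real.exp_pos _)]
    simp
  refine ⟨hi, ?_⟩
  have half : ∀ G : α → ℝ, Measurable G → (∀ ω, |G ω| = G ω) → (∀ ω, |G ω| ≤ |H ω|) →
      (∀ s : ℂ, s.re ∈ Set.Ioo a b →
        Integrable (fun ω => (G ω : ℂ) * Complex.exp (s * X ω)) μ) ∧
      AnalyticOnNhd ℂ (fun s : ℂ => ∫ ω, (G ω : ℂ) * Complex.exp (s * X ω) ∂μ)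
        {s | s.re ∈ Set.Ioo a b} := by
    intro G hG hG0 hGH
    have hG0' : ∀ ω, 0 ≤ G ω := fun ω => by rw [← hG0]; exact abs_nonneg _
    have hm : Measurable fun ω => ENNReal.ofReal (G ω) := hG.ennreal_ofReal
    have htop : ∀ᵐ ω ∂μ, ENNReal.ofReal (G ω) < ⊤ :=
      Filter.Eventually.of_forall fun _ => ENNReal.ofReal_lt_top
    have hiR : ∀ σ ∈ Set.Ioo a b, Integrable (fun ω => G ω * Real.exp (σ * X ω)) μ :=
      fun σ hσ => by
        refine (h σ hσ).mono (by fun_prop) (Filter.Eventually.of_forall fun ω => ?_)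
        rw [norm_mul, norm_mul]
        exact mul_le_mul_of_nonneg_right (hGH ω) (norm_nonneg _)
    have hsub : Set.Ioo a b ⊆ interior (ProbabilityTheory.integrableExpSet X
        (μ.withDensity fun ω => ENNReal.ofReal (G ω))) := by
      refine interior_maximal (fun σ hσ => ?_) isOpen_Ioo
      change Integrable _ _
      rw [integrable_withDensity_iff hm htop]
      refine (hiR σ hσ).congr (Filter.Eventually.of_forall fun ω => ?_)
      simp only [ENNReal.toReal_ofReal (hG0' ω)]
      ring
    have hA := ProbabilityTheory.analyticOnNhd_complexMGF (X := X)
      (μ := μ.withDensity fun ω => ENNReal.ofReal (G ω))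
    have heq : ProbabilityTheory.complexMGF X (μ.withDensity fun ω => ENNReal.ofReal (G ω)) =
        fun s : ℂ => ∫ ω, (G ω : ℂ) * Complex.exp (s * X ω) ∂μ := by
      funext s
      rw [ProbabilityTheory.complexMGF, integral_withDensity_eq_integral_toReal_smul hm htop]
      refine integral_congr_ae (Filter.Eventually.of_forall fun ω => ?_)
      simp only [ENNReal.toReal_ofReal (hG0' ω), Complex.real_smul]
    rw [heq] at hA
    refine ⟨fun s hs => ?_, hA.mono fun s hs => hsub hs⟩
    refine (hiR _ hs).norm.mono' (by fun_prop) (Filter.Eventually.of_forall fun ω => ?_)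
    rw [norm_mul, norm_mul, Complex.norm_exp, Complex.norm_real, Real.norm_eq_abs (Real.exp _),
      abs_of_pos (Real.exp_pos _)]
    simp
  obtain ⟨ip, ap⟩ := half (fun ω => max (H ω) 0) (by fun_prop)
    (fun ω => abs_of_nonneg (le_max_right _ _))
    (fun ω => by rw [abs_of_nonneg (le_max_right _ _)]; exact max_le (le_abs_self _) (abs_nonneg _))
  obtain ⟨im, am⟩ := half (fun ω => max (-H ω) 0) (by fun_prop)
    (fun ω => abs_of_nonneg (le_max_right _ _))
    (fun ω => by rw [abs_of_nonneg (le_max_right _ _)]; exact max_le (neg_le_abs _) (abs_nonneg _))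
  refine (ap.sub am).congr (isOpen_Ioo.preimage Complex.continuous_re) fun s hs => ?_
  change (∫ ω, ((max (H ω) 0 : ℝ) : ℂ) * Complex.exp (s * X ω) ∂μ) -
    ∫ ω, ((max (-H ω) 0 : ℝ) : ℂ) * Complex.exp (s * X ω) ∂μ = _
  rw [← integral_sub (ip s hs) (im s hs)]
  refine integral_congr_ae (Filter.Eventually.of_forall fun ω => ?_)
  simp only [← sub_mul, ← Complex.ofReal_sub]
  congr 2
  rcases le_total (H ω) 0 with h0 | h0
  · rw [max_eq_right h0, max_eq_left (by linarith)]; ring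
  · rw [max_eq_left h0, max_eq_right (by linarith)]; ring

lemma integrable_cone {φ : ℝ → ℝ} (hφ : Measurable φ)
    (h : IntegrableOn (fun x => φ x * x⁻¹) (Set.Ioi 0)) :
    Integrable (fun t => φ (normR F t)) ((measT F).restrict (cone F)) := by
  change Integrable (φ ∘ normR F) _
  rw [← integrable_map_measure (by fun_prop) (measurable_normR F).aemeasurable, map_normR_measT]
  refine Integrable.smul_measure ?_ ENNReal.ofReal_ne_top
  rw [integrable_withDensity_iff (by fun_prop)
    (Filter.Eventually.of_forall fun _ => ENNReal.ofReal_lt_top)]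
  refine h.congr_fun (fun x hx => ?_) measurableSet_Ioi
  have : (0 : ℝ) < x := hx
  simp only [ENNReal.toReal_ofReal (inv_pos.mpr this).le, one_div]

lemma integral_cone {φ : ℝ → ℂ} (hφ : Measurable φ) :
    ∫ t in cone F, φ (normR F t) ∂(measT F) =
      coneVol F * ∫ x in Set.Ioi (0 : ℝ), (x : ℂ)⁻¹ * φ x := by
  rw [← integral_map (f := φ) (measurable_normR F).aemeasurable (by fun_prop), map_normR_measT,
    integral_smul_measure, ENNReal.toReal_ofReal (coneVol_pos F).le, Complex.real_smul,
    integral_withDensity_eq_integral_toReal_smul (by fun_prop)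
      (Filter.Eventually.of_forall fun _ => ENNReal.ofReal_lt_top)]
  congr 1
  refine setIntegral_congr_fun measurableSet_Ioi fun x hx => ?_
  have : (0 : ℝ) < x := hx
  simp only [ENNReal.toReal_ofReal (inv_pos.mpr this).le, one_div, Complex.real_smul,
    Complex.ofReal_inv]

lemma integrable_split {p q : ℝ} (hp : 0 < p) (hq : q < 0) :
    Integrable (fun t => if normR F t < 1 then normR F t ^ p else normR F t ^ q)
      ((measT F).restrict (cone F)) := by
  refine integrable_cone F (φ := fun x => if x < 1 then x ^ p else x ^ q)
    (Measurable.ite measurableSet_Iio (by fun_prop) (by fun_prop)) ?_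
  rw [show Set.Ioi (0 : ℝ) = Set.Ioo 0 1 ∪ Set.Ici 1 from
    (Set.Ioo_union_Ici_eq_Ioi one_pos).symm]
  refine IntegrableOn.union ?_ ?_
  · refine ((intervalIntegral.integrableOn_Ioo_rpow_iff (s := p - 1) one_pos).mpr
      (by linarith)).congr_fun (fun x hx => ?_) measurableSet_Ioo
    simp only [if_pos hx.2]
    rw [Real.rpow_sub_one hx.1.ne', div_eq_mul_inv]
  · rw [integrableOn_Ici_iff_integrableOn_Ioi]
    refine (integrableOn_Ioi_rpow_of_lt (a := q - 1) (by linarith) one_pos).congr_fun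
      (fun x hx => ?_) measurableSet_Ioi
    have hx1 : (1 : ℝ) < x := hx
    simp only [if_neg hx1.le.not_gt]
    rw [Real.rpow_sub_one (by linarith), div_eq_mul_inv]

lemma integrable_small {p : ℝ} (hp : 0 < p) :
    Integrable (fun t => if normR F t < 1 then normR F t ^ p else 0)
      ((measT F).restrict (cone F)) := by
  have hm := measurable_normR F
  refine (integrable_split F hp (q := -1) (by norm_num)).mono'
    (Measurable.ite (measurableSet_Iio.preimage hm) (by fun_prop)
      (by fun_prop)).aestronglyMeasurable (Filter.Eventually.of_forall fun t => ?_)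
  have h0 := normR_nonneg F t
  split_ifs
  · rw [Real.norm_of_nonneg (by positivity)]
  · rw [norm_zero]; positivity

lemma integral_small {s : ℂ} (hs : 0 < s.re) :
    ∫ t in cone F, (if normR F t < 1 then (normR F t : ℂ) ^ s else 0) ∂(measT F) =
      coneVol F / s := by
  rw [integral_cone F (φ := fun x => if x < 1 then (x : ℂ) ^ s else 0)
    (Measurable.ite measurableSet_Iio (by fun_prop) (by fun_prop))]
  rw [div_eq_mul_inv]
  congr 1
  have h1 : ∫ x in Set.Ioi (0 : ℝ), (x : ℂ)⁻¹ * (if x < 1 then (x : ℂ) ^ s else 0) =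
      ∫ x in Set.Ioo (0 : ℝ) 1, (x : ℂ) ^ (s - 1) := by
    rw [← integral_indicator measurableSet_Ioi, ← integral_indicator measurableSet_Ioo]
    congr 1
    funext x
    by_cases hx : x ∈ Set.Ioo (0 : ℝ) 1
    · rw [Set.indicator_of_mem hx, Set.indicator_of_mem (show x ∈ Set.Ioi (0 : ℝ) from hx.1),
        if_pos hx.2, Complex.cpow_sub _ _ (by exact_mod_cast hx.1.ne'), Complex.cpow_one,
          div_eq_inv_mul]
    · rw [Set.indicator_of_notMem hx]
      by_cases hx0 : x ∈ Set.Ioi (0 : ℝ)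
      · rw [Set.indicator_of_mem hx0, if_neg (fun h => hx ⟨hx0, h⟩), mul_zero]
      · rw [Set.indicator_of_notMem hx0]
  have hs0 : s ≠ 0 := fun h => by simp [h] at hs
  rw [h1, ← integral_Ioc_eq_integral_Ioo, ← intervalIntegral.integral_of_le zero_le_one,
    integral_cpow (Or.inl (by simp [hs]))]
  simp [hs0]

/-! ### The Mellin transform of the theta series -/

lemma continuous_fD_mul (z : DS F) : Continuous fun t : RS F => fD F (structureMap F t * z) := by
  have : (fun t : RS F => fD F (structureMap F t * z)) = fun t : RS F =>
      (∏ v, Real.exp (-(Real.pi) * (|t.1 v| * ‖z.1 v‖) ^ 2)) *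
        ∏ v, Real.exp (-(2 * Real.pi) * (‖t.2 v‖ * ‖z.2 v‖) ^ 2) := by
    funext t
    obtain ⟨h1, h2⟩ := norm_structureMap_mul F t z
    simp only [fD, h1, h2]
  rw [this]
  fun_prop

lemma fD_pos (z : DS F) : 0 < fD F z := by rw [fD_eq]; positivity

lemma exp_two_log {N : ℝ} (hN : 0 < N) (s : ℂ) :
    Complex.exp (s * ((2 * Real.log N : ℝ) : ℂ)) = (N : ℂ) ^ (2 * s) := by
  rw [Complex.cpow_def_of_ne_zero (by exact_mod_cast hN.ne'), ← Complex.ofReal_log hN.le]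
  congr 1
  push_cast
  ring

lemma exp_two_log_real {N : ℝ} (hN : 0 < N) (σ : ℝ) :
    Real.exp (σ * (2 * Real.log N)) = N ^ (2 * σ) := by
  rw [Real.rpow_def_of_pos hN]
  congr 1
  ring

section MellinTheta

variable {F} {Λ : AddSubgroup (DS F)} [Countable Λ] {V : ℝ} {P : Set (DS F)}

instance countable_NZ : Countable (NZ F Λ) :=
  Function.Injective.countable (f := fun l : NZ F Λ => (⟨l, l.2.1⟩ : Λ))
    fun _ _ h => Subtype.ext (congrArg (Subtype.val : Λ → DS F) h)

lemma measurable_theta : Measurable (theta F Λ) := by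
  have : theta F Λ = fun t =>
      (∑' l : NZ F Λ, ENNReal.ofReal (fD F (structureMap F t * (l : DS F)))).toReal := by
    funext t
    rw [ENNReal.tsum_toReal_eq fun _ => ENNReal.ofReal_ne_top, theta]
    exact tsum_congr fun l => (ENNReal.toReal_ofReal (fD_pos F _).le).symm
  rw [this]
  refine Measurable.ennreal_toReal (Measurable.tsum fun l => ?_)
  exact (continuous_fD_mul F _).measurable.ennreal_ofReal

/-- Subtracting the polar part `1 / (V |N(t)|²)` on `|N(t)| < 1` from `Θ` leaves a function
whose Mellin transform over the cone is analytic to the left of `Re s = 1`. -/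
lemma mellin_theta (hV : 0 < V) (hP : IsAddFundamentalDomain Λ P (measD F))
    (hPV : measD F P = ENNReal.ofReal V) (hPb : Bornology.IsBounded P) :
    ∃ g : ℂ → ℂ, AnalyticOnNhd ℂ g {s | s.re ∈ Set.Ioo (1 - (2 * (deg F : ℝ))⁻¹) 6} ∧
      ∀ s : ℂ, 1 < s.re → s.re < 6 →
        Integrable (fun t => (theta F Λ t : ℂ) * (normR F t : ℂ) ^ (2 * s))
          ((measT F).restrict (cone F)) ∧
        ∫ t in cone F, (theta F Λ t : ℂ) * (normR F t : ℂ) ^ (2 * s) ∂(measT F) =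
          g s + coneVol F / (V * (2 * (s - 1))) := by
  obtain ⟨K1, hK1, hsmall⟩ := theta_small hV hP hPV hPb
  obtain ⟨K2, hK2, hlarge⟩ := theta_large hV hP hPV hPb
  have hn : (0 : ℝ) < deg F := by exact_mod_cast deg_pos F
  have hNm := measurable_normR F
  have hθm := measurable_theta (F := F) (Λ := Λ)
  set G : RS F → ℝ := fun t => if normR F t < 1 then V⁻¹ * (normR F t ^ 2)⁻¹ else 0 with hG
  have hGm : Measurable G :=
    Measurable.ite (measurableSet_Iio.preimage hNm) (by fun_prop) (by fun_prop)
  have hInt : ∀ σ ∈ Set.Ioo (1 - (2 * (deg F : ℝ))⁻¹) 6,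
      Integrable (fun t => (theta F Λ t - G t) * Real.exp (σ * (2 * Real.log (normR F t))))
        ((measT F).restrict (cone F)) := fun σ hσ => by
    have hp : 0 < (deg F : ℝ)⁻¹ - 2 + 2 * σ := by
      have h1 := hσ.1
      rw [mul_inv] at h1
      linarith
    have hq : -12 + 2 * σ < 0 := by linarith [hσ.2]
    refine ((integrable_split F hp hq).const_mul (K1 + K2)).mono'
      (by fun_prop) ((ae_restrict_mem (measurableSet_cone F)).mono fun t ht => ?_)
    have hN := normR_pos F (cone_subset F ht)
    rw [norm_mul, Real.norm_eq_abs, Real.norm_eq_abs, abs_of_pos (Real.exp_pos _),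
      exp_two_log_real hN]
    by_cases h1 : normR F t < 1
    · have h2 := hsmall t ht h1
      simp only [hG, if_pos h1]
      have h3 : scale F t * (normR F t ^ 2)⁻¹ * normR F t ^ (2 * σ) =
          normR F t ^ ((deg F : ℝ)⁻¹ - 2 + 2 * σ) := by
        rw [Real.rpow_add hN, Real.rpow_sub hN, scale, Real.rpow_two, div_eq_mul_inv]
      rw [← h3]
      have h4 : 0 < scale F t * (normR F t ^ 2)⁻¹ := by
        have := scale_pos F (cone_subset F ht)
        positivity
      have h5 : K1 * (scale F t * (normR F t ^ 2)⁻¹) ≤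
          (K1 + K2) * (scale F t * (normR F t ^ 2)⁻¹) :=
        mul_le_mul_of_nonneg_right (by linarith) h4.le
      have := mul_le_mul_of_nonneg_right (h2.trans h5) (Real.rpow_pos_of_pos hN (2 * σ)).le
      linarith
    · have h2 := hlarge t ht (not_lt.mp h1)
      simp only [hG, if_neg h1, sub_zero]
      have h3 : (normR F t ^ 12)⁻¹ * normR F t ^ (2 * σ) = normR F t ^ (-12 + 2 * σ) := by
        rw [Real.rpow_add hN, Real.rpow_neg hN.le]
        norm_cast
      rw [← h3]
      have h5 : K2 * (normR F t ^ 12)⁻¹ ≤ (K1 + K2) * (normR F t ^ 12)⁻¹ :=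
        mul_le_mul_of_nonneg_right (by linarith) (by positivity)
      have := mul_le_mul_of_nonneg_right (h2.trans h5) (Real.rpow_pos_of_pos hN (2 * σ)).le
      linarith
  obtain ⟨hi, ha⟩ := analyticOnNhd_laplace (by fun_prop) (by fun_prop) hInt
  refine ⟨_, ha, fun s hs1 hs6 => ?_⟩
  have hsI : s.re ∈ Set.Ioo (1 - (2 * (deg F : ℝ))⁻¹) 6 :=
    ⟨by have : (0 : ℝ) < (2 * (deg F : ℝ))⁻¹ := by positivity
        linarith, hs6⟩
  have i1 := hi s hsI
  have hre : (2 * (s - 1)).re = 2 * (s.re - 1) := by simp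
  have hs0 : 0 < (2 * (s - 1)).re := by rw [hre]; linarith
  -- the Mellin transform of the polar part
  have i2 : Integrable (fun t => (V : ℂ)⁻¹ *
      (if normR F t < 1 then (normR F t : ℂ) ^ (2 * (s - 1)) else 0))
      ((measT F).restrict (cone F)) := by
    refine Integrable.const_mul ?_ _
    refine (integrable_small F hs0).mono'
      (Measurable.ite (measurableSet_Iio.preimage hNm) (by fun_prop)
        (by fun_prop)).aestronglyMeasurable
      ((ae_restrict_mem (measurableSet_cone F)).mono fun t ht => ?_)
    have hN := normR_pos F (cone_subset F ht)
    split_ifs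
    · rw [Complex.norm_cpow_eq_rpow_re_of_pos hN]
    · rw [norm_zero]
  have e2 : ∫ t in cone F, (V : ℂ)⁻¹ *
      (if normR F t < 1 then (normR F t : ℂ) ^ (2 * (s - 1)) else 0) ∂(measT F) =
      coneVol F / (V * (2 * (s - 1))) := by
    rw [integral_const_mul, integral_small F hs0]
    simp only [div_eq_mul_inv, mul_inv]
    ring
  have hsplit : ∀ t ∈ cone F, ((theta F Λ t - G t : ℝ) : ℂ) *
      Complex.exp (s * ((2 * Real.log (normR F t) : ℝ) : ℂ)) + (V : ℂ)⁻¹ *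
      (if normR F t < 1 then (normR F t : ℂ) ^ (2 * (s - 1)) else 0) =
      (theta F Λ t : ℂ) * (normR F t : ℂ) ^ (2 * s) := fun t ht => by
    have hN := normR_pos F (cone_subset F ht)
    have hN0 : (normR F t : ℂ) ≠ 0 := by exact_mod_cast hN.ne'
    rw [exp_two_log hN]
    by_cases h1 : normR F t < 1
    · simp only [hG, if_pos h1]
      rw [mul_sub, mul_one, Complex.cpow_sub _ _ hN0, show (2 : ℂ) = ((2 : ℕ) : ℂ) from rfl,
        Complex.cpow_natCast]
      push_cast
      field_simp
      ring
    · simp only [hG, if_neg h1]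
      simp
  refine ⟨(i1.add i2).congr ((ae_restrict_mem (measurableSet_cone F)).mono hsplit), ?_⟩
  rw [← e2, ← integral_add i1 i2]
  exact (setIntegral_congr_fun (measurableSet_cone F) hsplit).symm

end MellinTheta

/-! ### Unfolding -/

lemma fR_mul_abs (w : DS F) : ∃ c : RS F, normR F c = normD F w ∧
    ∀ t, fR F (c * t) = fD F (structureMap F t * w) := by
  obtain ⟨c, hc1, hc2⟩ : ∃ c : RS F, (∀ v, |c.1 v| = ‖w.1 v‖) ∧ ∀ v, ‖c.2 v‖ = ‖w.2 v‖ :=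
    ⟨(fun v => ‖w.1 v‖, fun v => ((‖w.2 v‖ : ℝ) : ℂ)), fun v => abs_norm _, fun v => by simp⟩
  refine ⟨c, by simp only [normR, normD, hc1, hc2], fun t => ?_⟩
  have h1 := norm_structureMap_mul F (c * t) 1
  have h2 := norm_structureMap_mul F t w
  rw [mul_one] at h1
  have e1 : ∀ v, ‖(structureMap F (c * t)).1 v‖ = ‖(structureMap F t * w).1 v‖ := fun v => by
    rw [h1.1, h2.1, Prod.fst_mul, Pi.mul_apply, abs_mul, hc1]
    simp [mul_comm]
  have e2 : ∀ v, ‖(structureMap F (c * t)).2 v‖ = ‖(structureMap F t * w).2 v‖ := fun v => by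
    rw [h1.2, h2.2, Prod.snd_mul, Pi.mul_apply, norm_mul, hc2]
    simp [mul_comm]
  simp only [fR, fD, e1, e2]

/-- Each nonzero orbit contributes a shifted gamma integral. -/
lemma integral_mu0_eq {w : DS F} (hw : normD F w ≠ 0) (s : ℂ) :
    ∫ t, (fD F (structureMap F t * w) : ℂ) * (normR F t : ℂ) ^ s ∂mu0 F =
      GammaF F s / (normD F w : ℂ) ^ s := by
  obtain ⟨c, hc, hf⟩ := fR_mul_abs F w
  have hcT : c ∈ TF F := (normR_ne_zero_iff F c).mp (by rwa [hc])
  have hNm := measurable_normR F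
  have hfm : Measurable (fR F) := by
    have := (continuous_fD_mul F 1).measurable
    simp only [mul_one] at this
    exact this
  have hmp := measurePreserving_mul F hcT
  have hw0 : (normD F w : ℂ) ^ s ≠ 0 := by
    rw [Complex.cpow_def_of_ne_zero (by exact_mod_cast hw)]; exact Complex.exp_ne_zero _
  have h1 : GammaF F s = ∫ t, (fR F (c * t) : ℂ) * (normR F (c * t) : ℂ) ^ s ∂mu0 F := by
    rw [GammaF, ← mu0]
    conv_lhs => rw [← hmp.map_eq]
    rw [integral_map hmp.measurable.aemeasurable (by fun_prop)]
  rw [h1, eq_div_iff hw0, mul_comm, ← integral_const_mul]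
  refine integral_congr_ae (Filter.Eventually.of_forall fun t => ?_)
  simp only [hf, normR_mul, hc]
  rw [Complex.ofReal_mul, Complex.mul_cpow_ofReal_nonneg (normD_nonneg F w) (normR_nonneg F t)]
  ring

section Unfold

variable {F} {Λ : AddSubgroup (DS F)} [Countable Λ] {V : ℝ} {P : Set (DS F)}

/-- Nonzero lattice points are uniquely unit multiples of orbit representatives. -/
lemma exists_orbit_equiv {R : Set (DS F)} (hR : IsRepr F Λ R)
    (hmem : ∀ (ε : (𝓞 F)ˣ), ∀ l ∈ Λ, FtoD F ((ε : 𝓞 F) : F) * l ∈ Λ)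
    (hnd : ∀ l ∈ Λ, l ≠ 0 → normD F l ≠ 0) :
    ∃ e : R × (𝓞 F)ˣ ≃ NZ F Λ, ∀ p, (e p : DS F) = structureMap F (unitR F p.2) * (p.1 : DS F) := by
  obtain ⟨hRΛ, hR0, hRu⟩ := hR
  have hne : ∀ r : R, (r : DS F) ≠ 0 := fun r h => hR0 (h ▸ r.2)
  have hnz : ∀ p : R × (𝓞 F)ˣ, FtoD F ((p.2 : 𝓞 F) : F) * (p.1 : DS F) ∈ NZ F Λ := fun p => by
    refine ⟨hmem _ _ (hRΛ _ p.1.2), fun h => hne p.1 ?_⟩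
    have h2 : FtoD F (((p.2⁻¹ : (𝓞 F)ˣ) : 𝓞 F) : F) * (FtoD F ((p.2 : 𝓞 F) : F) * (p.1 : DS F)) =
        0 := by rw [Set.mem_singleton_iff.mp h, mul_zero]
    rw [← mul_assoc, ← map_mul, ← map_mul, Units.inv_mul, map_one, map_one, one_mul] at h2
    exact h2
  refine ⟨Equiv.ofBijective (fun p => ⟨_, hnz p⟩) ⟨fun p q h => ?_, fun l => ?_⟩, fun p => rfl⟩
  · have h1 : FtoD F ((p.2 : 𝓞 F) : F) * (p.1 : DS F) = FtoD F ((q.2 : 𝓞 F) : F) * (q.1 : DS F) :=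
      congrArg Subtype.val h
    have h2 := (hRu _ (hnz p).1 (hnz p).2).unique ⟨p.1.2, p.2, rfl⟩ ⟨q.1.2, q.2, h1.symm⟩
    have h3 : p.1 = q.1 := Subtype.ext h2
    rw [← h2] at h1
    exact Prod.ext h3 (unit_eq_one_of_mul_eq F (hnd _ (hRΛ _ p.1.2) (hne p.1)) h1)
  · obtain ⟨r, ⟨hr, ε, hε⟩, -⟩ := hRu l l.2.1 l.2.2
    exact ⟨(⟨r, hr⟩, ε), Subtype.ext hε⟩

/-- The Rankin–Selberg unfolding of the Mellin transform of `Θ` over the cone. -/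
lemma unfold_theta (hV : 0 < V) (hP : IsAddFundamentalDomain Λ P (measD F))
    (hPV : measD F P = ENNReal.ofReal V) (hPb : Bornology.IsBounded P)
    {R : Set (DS F)} (hR : IsRepr F Λ R)
    (hmem : ∀ (ε : (𝓞 F)ˣ), ∀ l ∈ Λ, FtoD F ((ε : 𝓞 F) : F) * l ∈ Λ)
    (hnd : ∀ l ∈ Λ, l ≠ 0 → normD F l ≠ 0) {s : ℂ}
    (hInt : Integrable (fun t => (theta F Λ t : ℂ) * (normR F t : ℂ) ^ s)
      ((measT F).restrict (cone F))) :
    HasSum (fun r : R => (Units.torsionOrder F : ℂ) * (GammaF F s / (normD F (r : DS F) : ℂ) ^ s))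
      (∫ t in cone F, (theta F Λ t : ℂ) * (normR F t : ℂ) ^ s ∂(measT F)) := by
  have hNm := measurable_normR F
  have hfm : ∀ l : DS F, Measurable fun t => fD F (structureMap F t * l) :=
    fun l => (continuous_fD_mul F l).measurable
  have hθ : ∀ t ∈ cone F, HasSum (fun l : NZ F Λ => fD F (structureMap F t * (l : DS F)))
      (theta F Λ t) := fun t ht =>
    (hasSum_theta (summable_gauss hV hP hPV hPb (cone_subset F ht))).1
  have hθ0 : ∀ t, 0 ≤ theta F Λ t := fun t => tsum_nonneg fun l => (fD_pos F _).le
  set Φ : DS F → RS F → ℂ := fun l t =>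
    (fD F (structureMap F t * l) : ℂ) * (normR F t : ℂ) ^ s with hΦ
  have hΦm : ∀ l, Measurable (Φ l) := fun l => by
    have := hfm l
    simp only [hΦ]
    fun_prop
  have hΦn : ∀ l, ∀ t ∈ cone F, ‖Φ l t‖ = fD F (structureMap F t * l) * normR F t ^ s.re :=
    fun l t ht => by
      simp only [hΦ]
      rw [norm_mul, Complex.norm_cpow_eq_rpow_re_of_pos (normR_pos F (cone_subset F ht)),
        Complex.norm_real, Real.norm_of_nonneg (fD_pos F _).le]
  have hbs : ∀ t ∈ cone F, HasSum (fun l : NZ F Λ => ‖Φ (l : DS F) t‖)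
      ‖(theta F Λ t : ℂ) * (normR F t : ℂ) ^ s‖ := fun t ht => by
    simp only [hΦn _ t ht]
    rw [norm_mul, Complex.norm_cpow_eq_rpow_re_of_pos (normR_pos F (cone_subset F ht)),
      Complex.norm_real, Real.norm_of_nonneg (hθ0 t)]
    exact (hθ t ht).mul_right _
  have hmc : ∀ {p : RS F → Prop}, (∀ t ∈ cone F, p t) → ∀ᵐ t ∂((measT F).restrict (cone F)), p t :=
    fun h => (ae_restrict_mem (measurableSet_cone F)).mono h
  have hbi : Integrable (fun t => ∑' l : NZ F Λ, ‖Φ (l : DS F) t‖)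
      ((measT F).restrict (cone F)) :=
    hInt.norm.congr (hmc fun t ht => (hbs t ht).tsum_eq.symm)
  have hΦi : ∀ l : NZ F Λ, Integrable (Φ (l : DS F)) ((measT F).restrict (cone F)) := fun l =>
    hbi.mono' (hΦm _).aestronglyMeasurable (hmc fun t ht =>
      (hbs t ht).summable.le_tsum l fun _ _ => norm_nonneg _)
  have hS1 := hasSum_integral_of_dominated_convergence
    (F := fun (l : NZ F Λ) t => Φ (l : DS F) t)
    (f := fun t => (theta F Λ t : ℂ) * (normR F t : ℂ) ^ s)
    (fun (l : NZ F Λ) t => ‖Φ (l : DS F) t‖) (fun l => (hΦm _).aestronglyMeasurable)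
    (fun l => Filter.Eventually.of_forall fun t => le_rfl) (hmc fun t ht => (hbs t ht).summable) hbi
    (hmc fun t ht => (Complex.hasSum_ofReal.mpr (hθ t ht)).mul_right _)
  have hS2 := hasSum_integral_of_dominated_convergence
    (F := fun (l : NZ F Λ) t => ‖Φ (l : DS F) t‖)
    (f := fun t => ‖(theta F Λ t : ℂ) * (normR F t : ℂ) ^ s‖)
    (fun (l : NZ F Λ) t => ‖Φ (l : DS F) t‖) (fun l => (hΦm _).norm.aestronglyMeasurable)
    (fun l => Filter.Eventually.of_forall fun t => (norm_norm _).le)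
    (hmc fun t ht => (hbs t ht).summable) hbi (hmc fun t ht => hbs t ht)
  obtain ⟨e, he⟩ := exists_orbit_equiv hR hmem hnd
  have hS1' := (e.hasSum_iff (f := fun l : NZ F Λ => ∫ t in cone F, Φ (l : DS F) t ∂(measT F))).mpr
    hS1
  have hS2' := (e.summable_iff
    (f := fun l : NZ F Λ => ∫ t in cone F, ‖Φ (l : DS F) t‖ ∂(measT F))).mpr hS2.summable
  refine hS1'.prod_fiberwise fun r => ?_
  have hr0 : normD F (r : DS F) ≠ 0 := hnd _ (hR.1 _ r.2) fun h => hR.2.1 (h ▸ r.2)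
  -- the orbit of `r` over the cone is the whole of `T_F`, covered `w_F` times
  have hmul : ∀ ε : (𝓞 F)ˣ, Measurable fun t : RS F => unitR F ε * t := fun ε => by fun_prop
  have hΦe : ∀ (ε : (𝓞 F)ˣ) (t : RS F), Φ (r : DS F) (unitR F ε * t) =
      Φ (e (r, ε) : DS F) t := fun ε t => by
    simp only [hΦ, he, normR_mul, normR_unitR, one_mul]
    rw [mul_comm (unitR F ε) t, map_mul, mul_assoc]
  have hIm : Integrable (Φ (r : DS F)) (Measure.sum fun ε : (𝓞 F)ˣ =>
      ((measT F).restrict (cone F)).map fun t => unitR F ε * t) := by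
    refine integrable_sum_measure (fun ε => ?_) ?_
    · rw [integrable_map_measure (hΦm _).aestronglyMeasurable (hmul ε).aemeasurable]
      exact (hΦi (e (r, ε))).congr (Filter.Eventually.of_forall fun t => (hΦe ε t).symm)
    · have h := hS2'.prod_factor r
      refine h.congr fun ε => ?_
      rw [integral_map (hmul ε).aemeasurable (hΦm _).norm.aestronglyMeasurable]
      simp only [hΦe, Function.comp]
  have hfin := hasSum_integral_measure hIm
  rw [← torsionOrder_smul_mu0, integral_smul_measure] at hfin
  have hval : (Units.torsionOrder F : ENNReal).toReal • ∫ t, Φ (r : DS F) t ∂mu0 F =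
      (Units.torsionOrder F : ℂ) * (GammaF F s / (normD F (r : DS F) : ℂ) ^ s) := by
    rw [integral_mu0_eq F hr0]
    simp
  rw [hval] at hfin
  refine hfin.congr_fun fun ε => ?_
  rw [integral_map (hmul ε).aemeasurable (hΦm _).aestronglyMeasurable]
  simp only [hΦe, Function.comp]

end Unfold

/-! ### The residue at `s = 1` -/

section Residue

variable {F}

lemma units_mul_mem_latAB (a b : FractionalIdeal (𝓞 F)⁰ F) (z : DS F) (ε : (𝓞 F)ˣ) (l : DS F)
    (hl : l ∈ latAB F a b z) : FtoD F ((ε : 𝓞 F) : F) * l ∈ latAB F a b z := by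
  obtain ⟨α, hα, β, hβ, rfl⟩ := hl
  have key : ∀ (c : FractionalIdeal (𝓞 F)⁰ F) (γ : F), γ ∈ c → ((ε : 𝓞 F) : F) * γ ∈ c := by
    intro c γ hγ
    have := Submodule.smul_mem (c : Submodule (𝓞 F) F) (ε : 𝓞 F) hγ
    rwa [Algebra.smul_def] at this
  refine ⟨_, key a α hα, _, key b β hβ, ?_⟩
  rw [map_mul, map_mul, mul_add, mul_assoc]

/-- Analytic continuation and residue of the completed Eisenstein series of an arbitrary
`U_F`-stable non-degenerate lattice of covolume `V`. -/
lemma Ehat_continuation {Λ : AddSubgroup (DS F)} [Countable Λ] {V : ℝ} {P R : Set (DS F)}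
    (hV : 0 < V) (hP : IsAddFundamentalDomain Λ P (measD F))
    (hPV : measD F P = ENNReal.ofReal V) (hPb : Bornology.IsBounded P)
    (hR : IsRepr F Λ R)
    (hmem : ∀ ε : (𝓞 F)ˣ, ∀ l ∈ Λ, FtoD F ((ε : 𝓞 F) : F) * l ∈ Λ)
    (hnd : ∀ l ∈ Λ, l ≠ 0 → normD F l ≠ 0) :
    ∃ U ∈ nhds (1 : ℂ), ∃ g : ℂ → ℂ, AnalyticOnNhd ℂ g U ∧
      ∀ s ∈ U, 1 < s.re → Ehat F V R s = g s + ((CF F / 2 : ℝ) : ℂ) / (s - 1) := by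
  obtain ⟨g, hg, hgs⟩ := mellin_theta hV hP hPV hPb
  have hn : (1 : ℝ) ≤ deg F := by exact_mod_cast deg_pos F
  have hδ : (0 : ℝ) < (2 * (deg F : ℝ))⁻¹ := by positivity
  have hδ2 : (2 * (deg F : ℝ))⁻¹ ≤ 1 := inv_le_one_of_one_le₀ (by linarith)
  have hsub : ∀ s ∈ Metric.ball (1 : ℂ) ((2 * (deg F : ℝ))⁻¹),
      s.re ∈ Set.Ioo (1 - (2 * (deg F : ℝ))⁻¹) 6 := by
    intro s hs
    rw [Metric.mem_ball, dist_eq_norm] at hs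
    have h1 := (Complex.abs_re_le_norm (s - 1)).trans_lt hs
    rw [abs_lt, Complex.sub_re, Complex.one_re] at h1
    constructor <;> linarith [h1.1, h1.2]
  have hVC : (V : ℂ) ≠ 0 := by exact_mod_cast hV.ne'
  have hw : (Units.torsionOrder F : ℂ) ≠ 0 := by
    exact_mod_cast (Units.torsionOrder_ne_zero F)
  have hpow : Differentiable ℂ (fun s : ℂ => (V : ℂ) ^ (s - 1)) := fun s =>
    (differentiableAt_id.sub_const 1).const_cpow (Or.inl hVC)
  have hpow' : Differentiable ℂ (fun s : ℂ => (V : ℂ) ^ s) := fun s =>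
    differentiableAt_id.const_cpow (Or.inl hVC)
  have hds : Differentiable ℂ (dslope (fun s : ℂ => (V : ℂ) ^ (s - 1)) 1) := by
    have := (Complex.differentiableOn_dslope (c := (1 : ℂ)) Filter.univ_mem).2
      hpow.differentiableOn
    exact differentiableOn_univ.1 this
  refine ⟨_, Metric.ball_mem_nhds 1 hδ, fun s => (V : ℂ) ^ s / Units.torsionOrder F * g s +
    ((CF F / 2 : ℝ) : ℂ) * dslope (fun s : ℂ => (V : ℂ) ^ (s - 1)) 1 s, ?_, ?_⟩
  · intro s hs
    exact (((hpow'.analyticAt s).div analyticAt_const hw).mul (hg s (hsub s hs))).add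
      (analyticAt_const.mul (hds.analyticAt s))
  · intro s hs h1
    obtain ⟨hInt, hI⟩ := hgs s h1 (hsub s hs).2
    have hsum := (unfold_theta hV hP hPV hPb hR hmem hnd hInt).tsum_eq
    have hs1 : s - 1 ≠ 0 := by
      intro h
      rw [sub_eq_zero.1 h, Complex.one_re] at h1
      exact lt_irrefl _ h1
    have hE : Ehat F V R s = (V : ℂ) ^ s / Units.torsionOrder F *
        (g s + coneVol F / (V * (2 * (s - 1)))) := by
      rw [← hI, ← hsum, Ehat, Eis, ← tsum_mul_left, ← tsum_mul_left]
      refine tsum_congr fun r => ?_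
      field_simp
    have hd : dslope (fun s : ℂ => (V : ℂ) ^ (s - 1)) 1 s
        = ((V : ℂ) ^ (s - 1) - 1) / (s - 1) := by
      rw [dslope_of_ne _ (sub_ne_zero.1 hs1), slope_def_field]
      simp
    beta_reduce
    rw [hE, hd, Complex.cpow_sub _ _ hVC, Complex.cpow_one, coneVol_eq]
    push_cast
    field_simp
    ring

end Residue

/-- `Ê(𝔞z + 𝔟, s)` extends meromorphically around `s = 1` with a simple
pole of residue `C_F/2`; in particular `lim_{s→1} (s-1) Ê(Λ, s) = C_F/2`. -/
theorem statement10 (a b : FractionalIdeal (𝓞 F)⁰ F) (ha : a ≠ 0) (hb : b ≠ 0)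
    (x y : RS F) (hy : IsUnit y) (z : DS F)
    (hz : z = structureMap F x + structureMap F y * jF F)
    (V : ℝ) (hV0 : 0 ≤ V) (hV : HasVol F (latAB F a b z) V)
    (R : Set (DS F)) (hR : IsRepr F (latAB F a b z) R) :
    (∃ U ∈ nhds (1 : ℂ), ∃ g : ℂ → ℂ, AnalyticOnNhd ℂ g U ∧
      ∀ s ∈ U, 1 < s.re → Ehat F V R s = g s + ((CF F / 2 : ℝ) : ℂ) / (s - 1)) ∧
    Filter.Tendsto (fun s : ℂ => (s - 1) * Ehat F V R s)
      (nhdsWithin 1 {s : ℂ | 1 < s.re}) (nhds ((CF F / 2 : ℝ) : ℂ)) := by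
  obtain ⟨hc, hV0', P, hP, hPb, hPV⟩ := latAB_fundDom ha hb hy hz hV
  have hext := Ehat_continuation hV0' hP hPV hPb hR (units_mul_mem_latAB a b z)
    (fun l hl h0 => latAB_nondeg hy hz hl h0)
  refine ⟨hext, ?_⟩
  obtain ⟨U, hU, g, hg, hgE⟩ := hext
  have hgc : ContinuousAt g 1 := (hg 1 (mem_of_mem_nhds hU)).continuousAt
  have hlim : Filter.Tendsto (fun s : ℂ => (s - 1) * g s + ((CF F / 2 : ℝ) : ℂ))
      (nhds 1) (nhds ((CF F / 2 : ℝ) : ℂ)) := by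
    have h : ContinuousAt (fun s : ℂ => (s - 1) * g s + ((CF F / 2 : ℝ) : ℂ)) 1 := by
      fun_prop
    simpa [ContinuousAt] using h
  refine (hlim.mono_left nhdsWithin_le_nhds).congr' ?_
  filter_upwards [mem_nhdsWithin_of_mem_nhds hU, self_mem_nhdsWithin] with s hs h1
  have hs1 : s - 1 ≠ 0 := by
    intro h
    rw [sub_eq_zero.1 h, Complex.one_re] at h1
    exact lt_irrefl _ h1
  rw [hgE s hs h1]
  field_simp

end Hecke
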